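/- Let 𝔽 denote the Fano plane. There exist constants N_0 and c > 0 such that for all integers n ≥ N_0 and all integers t with 0 ≤ t ≤ c·n, one has EX(n,(t+1)𝔽) = { K_t^3 ⋈ B_3(n−t) }. -/

import Mathlib

open Filter

namespace DensityCH

/-- An `r`-uniform hypergraph with vertices in `ℕ`:
a finite vertex set together with a set of `r`-element edges. -/
structure HGraph (r : ℕ) where
  verts : Finset ℕ
  edges : Finset (Finset ℕ)
  edges_sub : ∀ e ∈ edges, e ⊆ verts
  edges_card : ∀ e ∈ edges, e.card = r

namespace HGraph

/-- Build an `r`-graph from a vertex set and a set of candidate edges,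
keeping exactly the well-formed candidates. -/
def ofEdges (r : ℕ) (V : Finset ℕ) (E : Finset (Finset ℕ)) : HGraph r where
  verts := V
  edges := E.filter fun e => e ⊆ V ∧ e.card = r
  edges_sub := fun e he => ((Finset.mem_filter.mp he).2).1
  edges_card := fun e he => ((Finset.mem_filter.mp he).2).2

variable {r : ℕ}

/-- `H` contains a copy of `F`, i.e. a subgraph isomorphic to `F`. -/
def IsCopyIn (F H : HGraph r) : Prop :=
  ∃ f : ℕ → ℕ, Set.InjOn f ↑F.verts ∧ (∀ v ∈ F.verts, f v ∈ H.verts) ∧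
    ∀ e ∈ F.edges, e.image f ∈ H.edges

/-- The subgraph of `H` induced on `S`. -/
def induce (H : HGraph r) (S : Finset ℕ) : HGraph r :=
  ofEdges r (H.verts ∩ S) (H.edges.filter fun e => e ⊆ S)

/-- Delete a vertex from `H`. -/
def deleteVert (H : HGraph r) (v : ℕ) : HGraph r :=
  ofEdges r (H.verts.erase v) (H.edges.filter fun e => v ∉ e)

/-- The degree of a vertex. -/
def deg (H : HGraph r) (v : ℕ) : ℕ := (H.edges.filter fun e => v ∈ e).card

/-- The maximum degree `Δ(H)`. -/
def maxDeg (H : HGraph r) : ℕ := H.verts.sup H.deg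

/-- The minimum degree `δ(H)`. -/
def minDeg (H : HGraph r) : ℕ :=
  if h : H.verts.Nonempty then H.verts.inf' h H.deg else 0

/-- The average degree `d(H) = r·|E(H)|/|V(H)|`. -/
noncomputable def avgDeg (H : HGraph r) : ℝ :=
  (r : ℝ) * (H.edges.card : ℝ) / (H.verts.card : ℝ)

/-- `H` contains `k` pairwise vertex-disjoint copies of `F`, i.e. `ν(F,H) ≥ k`. -/
def HasMatching (F H : HGraph r) (k : ℕ) : Prop :=
  ∃ S : Fin k → Finset ℕ,
    (∀ i, S i ⊆ H.verts ∧ (S i).card = F.verts.card) ∧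
    (∀ i j, i ≠ j → Disjoint (S i) (S j)) ∧
    ∀ i, F.IsCopyIn (H.induce (S i))

/-- Isomorphism of hypergraphs. -/
def Iso (G H : HGraph r) : Prop :=
  ∃ f : ℕ → ℕ, Set.BijOn f ↑G.verts ↑H.verts ∧
    ∀ e ∈ Finset.powersetCard r G.verts, (e ∈ G.edges ↔ e.image f ∈ H.edges)

/-- The join `G ⋈ H`: all edges of `G`, all edges of `H`, and all `r`-sets meeting
both vertex sets. -/
def join (G H : HGraph r) : HGraph r :=
  ofEdges r (G.verts ∪ H.verts)
    (G.edges ∪ H.edges ∪ ((Finset.powersetCard r (G.verts ∪ H.verts)).filter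
      fun e => (e ∩ G.verts).Nonempty ∧ (e ∩ H.verts).Nonempty))

end HGraph

/-- The complete `r`-graph on a vertex set `S`. -/
def completeOn (r : ℕ) (S : Finset ℕ) : HGraph r :=
  HGraph.ofEdges r S (Finset.powersetCard r S)

/-- The `r`-graph on `V` with no edges. -/
def emptyOn (r : ℕ) (V : Finset ℕ) : HGraph r := HGraph.ofEdges r V ∅

/-- The Turán number `ex(n,F)`. -/
noncomputable def exN (r n : ℕ) (F : HGraph r) : ℕ :=
  sSup {m | ∃ H : HGraph r, H.verts.card = n ∧ ¬ F.IsCopyIn H ∧ H.edges.card = m}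

/-- `d(n,F) = r·ex(n,F)/n`. -/
noncomputable def dN (r n : ℕ) (F : HGraph r) : ℝ := (r : ℝ) * (exN r n F : ℝ) / (n : ℝ)

/-- `δ(n,F) = ex(n,F) − ex(n−1,F)` (as a real number). -/
noncomputable def deltaN (r n : ℕ) (F : HGraph r) : ℝ := (exN r n F : ℝ) - (exN r (n-1) F : ℝ)

/-- `x` is the Turán density `π(F)`, i.e. the limit of `ex(n,F)/C(n,r)`. -/
def HasTuranDensity (r : ℕ) (F : HGraph r) (x : ℝ) : Prop :=
  Tendsto (fun n : ℕ => (exN r n F : ℝ) / (n.choose r : ℝ)) atTop (nhds x)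

/-- `ex(n,(t+1)F)`: the maximum number of edges of an `n`-vertex `r`-graph with no
`t+1` pairwise vertex-disjoint copies of `F`. -/
noncomputable def exMatchN (r n t : ℕ) (F : HGraph r) : ℕ :=
  sSup {m | ∃ H : HGraph r, H.verts.card = n ∧ ¬ F.HasMatching H (t+1) ∧ H.edges.card = m}

/-- `H ∈ EX(n,F)`. -/
def IsExtremalFree (r n : ℕ) (F H : HGraph r) : Prop :=
  H.verts.card = n ∧ ¬ F.IsCopyIn H ∧ H.edges.card = exN r n F

/-- `H ∈ EX(n,(t+1)F)`. -/
def IsExtremalMatchingFree (r n t : ℕ) (F H : HGraph r) : Prop :=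
  H.verts.card = n ∧ ¬ F.HasMatching H (t+1) ∧ H.edges.card = exMatchN r n t F

/-- `F` is `(f1, f2)`-bounded at `n`. -/
def BoundedAt (r n : ℕ) (F : HGraph r) (f1 f2 : ℝ) : Prop :=
  ∀ H : HGraph r, H.verts.card = n → ¬ F.IsCopyIn H →
    dN r n F - f1 ≤ H.avgDeg → (H.maxDeg : ℝ) ≤ dN r n F + f2

/-- `ex(·,F)` is `g`-smooth at `n`: `|δ(n,F) − d(n−1,F)| ≤ g(n)`. -/
def SmoothAt (r n : ℕ) (F : HGraph r) (g : ℝ) : Prop :=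
  |deltaN r n F - dN r (n-1) F| ≤ g

/-- The collection `H 0, …, H t` (on a common vertex set) has a rainbow `F`-matching. -/
def HasRainbowMatching (r t : ℕ) (F : HGraph r) (H : Fin (t+1) → HGraph r) : Prop :=
  ∃ S : Fin (t+1) → Finset ℕ,
    (∀ i, S i ⊆ (H i).verts ∧ (S i).card = F.verts.card) ∧
    (∀ i j, i ≠ j → Disjoint (S i) (S j)) ∧
    ∀ i, F.IsCopyIn ((H i).induce (S i))

/-!  Patterns -/

/-- An `r`-uniform pattern: a finite index set together with a collection of
`r`-multisets on it. -/
structure Pattern (r : ℕ) where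
  idx : Finset ℕ
  mE : Finset (Multiset ℕ)
  card_eq : ∀ s ∈ mE, Multiset.card s = r
  mem_idx : ∀ s ∈ mE, ∀ i ∈ s, i ∈ idx

namespace Pattern

variable {r : ℕ}

/-- The pattern `P − i`. -/
def erase (P : Pattern r) (i : ℕ) : Pattern r where
  idx := P.idx.erase i
  mE := P.mE.filter fun s => i ∉ s
  card_eq := fun s hs => P.card_eq s (Finset.mem_filter.mp hs).1
  mem_idx := by
    intro s hs j hj
    have h1 := Finset.mem_filter.mp hs
    refine Finset.mem_erase.mpr ⟨?_, P.mem_idx s h1.1 j hj⟩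
    rintro rfl
    exact h1.2 hj

/-- `H` is a `P`-construction: a blowup of the pattern `P`. -/
def IsConstruction (P : Pattern r) (H : HGraph r) : Prop :=
  ∃ part : ℕ → ℕ, (∀ v ∈ H.verts, part v ∈ P.idx) ∧
    ∀ e : Finset ℕ, e ∈ H.edges ↔ (e ⊆ H.verts ∧ e.card = r ∧ Multiset.map part e.val ∈ P.mE)

/-- `H` is a `P`-subconstruction: a subgraph of a `P`-construction. -/
def IsSubconstruction (P : Pattern r) (H : HGraph r) : Prop :=
  ∃ G : HGraph r, P.IsConstruction G ∧ H.verts ⊆ G.verts ∧ H.edges ⊆ G.edges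

end Pattern

/-- `Λ(P,n)`: the maximum number of edges of an `n`-vertex `P`-construction. -/
noncomputable def patEx (r : ℕ) (P : Pattern r) (n : ℕ) : ℕ :=
  sSup {m | ∃ H : HGraph r, P.IsConstruction H ∧ H.verts.card = n ∧ H.edges.card = m}

/-- The Lagrangian `λ(P) = lim Λ(P,n)/C(n,r)`. -/
noncomputable def patLagrangian (r : ℕ) (P : Pattern r) : ℝ :=
  limUnder atTop fun n : ℕ => (patEx r P n : ℝ) / (n.choose r : ℝ)

/-- The pattern `P` is minimal: `λ(P−i) < λ(P)` for all `i`. -/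
def Pattern.Minimal {r : ℕ} (P : Pattern r) : Prop :=
  ∀ i ∈ P.idx, patLagrangian r (P.erase i) < patLagrangian r P

/-- `(F,P)` is a Turán pair. -/
def IsTuranPair (r : ℕ) (F : HGraph r) (P : Pattern r) : Prop :=
  (∀ H : HGraph r, P.IsConstruction H → ¬ F.IsCopyIn H) ∧
  (∀ H : HGraph r, ¬ F.IsCopyIn H → H.edges.card = exN r H.verts.card F →
    P.IsConstruction H)

/-- `F` is edge-stable with respect to `P` (with Turán density `π`). -/
def EdgeStable (r : ℕ) (F : HGraph r) (P : Pattern r) (π : ℝ) : Prop :=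
  ∀ δ : ℝ, 0 < δ → ∃ N₀ : ℕ, ∃ ζ : ℝ, 0 < ζ ∧
    ∀ H : HGraph r, N₀ ≤ H.verts.card → ¬ F.IsCopyIn H →
      (π - ζ) * (H.verts.card.choose r : ℝ) ≤ (H.edges.card : ℝ) →
      ∃ H' : HGraph r, H'.verts ⊆ H.verts ∧ H'.edges ⊆ H.edges ∧
        (π - δ) * (H.verts.card.choose r : ℝ) ≤ (H'.edges.card : ℝ) ∧
        P.IsSubconstruction H'

/-- `F` is weakly vertex-extendable with respect to `P` (with Turán density `π`). -/
def WeaklyVertexExtendable (r : ℕ) (F : HGraph r) (P : Pattern r) (π : ℝ) : Prop :=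
  ∀ δ : ℝ, 0 < δ → ∃ N₀ : ℕ, ∃ ζ : ℝ, 0 < ζ ∧
    ∀ H : HGraph r, N₀ ≤ H.verts.card → ¬ F.IsCopyIn H →
      (π - ζ) * (((H.verts.card - 1).choose (r-1) : ℕ) : ℝ) ≤ (H.minDeg : ℝ) →
      ∀ v ∈ H.verts, P.IsSubconstruction (H.deleteVert v) →
        (H.deg v : ℝ) ≤ (π + δ) * (((H.verts.card - 1).choose (r-1) : ℕ) : ℝ)

/-- `F` is degree-stable with respect to `P` (with Turán density `π`). -/
def DegreeStable (r : ℕ) (F : HGraph r) (P : Pattern r) (π : ℝ) : Prop :=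
  ∃ ζ : ℝ, 0 < ζ ∧ ∃ N₀ : ℕ,
    ∀ H : HGraph r, N₀ ≤ H.verts.card → ¬ F.IsCopyIn H →
      (π - ζ) * (((H.verts.card - 1).choose (r-1) : ℕ) : ℝ) ≤ (H.minDeg : ℝ) →
      P.IsSubconstruction H

/-!  Concrete constructions -/

/-- The generalized Turán graph `T_r(·,ℓ)` on vertex set `V` (parts are residue
classes mod `ℓ`; on an interval these are balanced). -/
def turanOn (r ℓ : ℕ) (V : Finset ℕ) : HGraph r :=
  HGraph.ofEdges r V ((Finset.powersetCard r V).filter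
    fun e => ∀ u ∈ e, ∀ v ∈ e, u % ℓ = v % ℓ → u = v)

/-- The `r`-graph on `V₁ ∪ V₂` whose edges are all `r`-sets meeting both parts. -/
def crossOn (r : ℕ) (V₁ V₂ : Finset ℕ) : HGraph r :=
  HGraph.ofEdges r (V₁ ∪ V₂) ((Finset.powersetCard r (V₁ ∪ V₂)).filter
    fun e => (e ∩ V₁).Nonempty ∧ (e ∩ V₂).Nonempty)

/-- The `r`-graph on `V₁ ∪ V₂` whose edges are all `r`-sets meeting `V₁` in an odd
number of vertices. -/
def oddCross (r : ℕ) (V₁ V₂ : Finset ℕ) : HGraph r :=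
  HGraph.ofEdges r (V₁ ∪ V₂) ((Finset.powersetCard r (V₁ ∪ V₂)).filter
    fun e => Odd (e ∩ V₁).card)

/-- The Fano plane. -/
def fano : HGraph 3 :=
  HGraph.ofEdges 3 (Finset.Icc 1 7)
    {({1,2,3} : Finset ℕ), {3,4,5}, {5,6,1}, {1,7,4}, {2,7,5}, {3,7,6}, {2,4,6}}

/-- The generalized triangle `𝕋_r`, with edges `{1,…,r}`, `{1,…,r−1,r+1}` and
`{r,…,2r−1}`. -/
def genTri (r : ℕ) : HGraph r :=
  HGraph.ofEdges r (Finset.Icc 1 (2*r - 1))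
    {Finset.Icc 1 r, Finset.Icc 1 (r-1) ∪ {r+1}, Finset.Icc r (2*r - 1)}

/-- `G` is a blowup of the `r`-graph `W` (viewing `W` as a pattern). -/
def IsBlowupOf {r : ℕ} (W G : HGraph r) : Prop :=
  ∃ part : ℕ → ℕ, (∀ v ∈ G.verts, part v ∈ W.verts) ∧
    ∀ e : Finset ℕ, e ∈ G.edges ↔
      (e ⊆ G.verts ∧ e.card = r ∧ ∃ f ∈ W.edges, Multiset.map part e.val = f.val)

/-- The expansion `H^F` of an `r`-graph `F`: for every pair of vertices not covered
by an edge of `F`, add an edge consisting of this pair plus `r−2` new vertices,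
these sets of new vertices being pairwise disjoint. -/
def HGraph.expansion {r : ℕ} (F : HGraph r) : HGraph r :=
  HGraph.ofEdges r
    (F.verts ∪ (((F.verts ×ˢ F.verts).filter fun p =>
        p.1 < p.2 ∧ ∀ e ∈ F.edges, ¬ (p.1 ∈ e ∧ p.2 ∈ e)).biUnion fun p =>
      (Finset.range (r-2)).image fun s =>
        (F.verts.sup id + 1) + (p.1 * (F.verts.sup id + 1) + p.2) * r + s))
    (F.edges ∪ (((F.verts ×ˢ F.verts).filter fun p =>
        p.1 < p.2 ∧ ∀ e ∈ F.edges, ¬ (p.1 ∈ e ∧ p.2 ∈ e)).image fun p =>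
      insert p.1 (insert p.2 ((Finset.range (r-2)).image fun s =>
        (F.verts.sup id + 1) + (p.1 * (F.verts.sup id + 1) + p.2) * r + s))))

/-- A `2`-graph is a tree on `k` vertices: `k` vertices, `k−1` edges, connected. -/
def IsTreeGraph (k : ℕ) (T : HGraph 2) : Prop :=
  T.verts.card = k ∧ T.edges.card = k - 1 ∧
  ∀ S : Finset ℕ, S ⊆ T.verts → S.Nonempty → S ≠ T.verts →
    ∃ e ∈ T.edges, (e ∩ S).Nonempty ∧ (e \ S).Nonempty

/-- `T` satisfies the Erdős–Sós property for `k`: every graph with average degree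
greater than `k−2` contains `T`. -/
def ErdosSos (k : ℕ) (T : HGraph 2) : Prop :=
  ∀ G : HGraph 2, ((k : ℝ) - 2) * (G.verts.card : ℝ) < 2 * (G.edges.card : ℝ) →
    T.IsCopyIn G

/-- The `(r−2)`-expansion `Exp(T)` of a `2`-graph `T`: enlarge every edge by one
common fixed set of `r−2` new vertices. -/
def expTree (r : ℕ) (T : HGraph 2) : HGraph r :=
  HGraph.ofEdges r
    (T.verts ∪ ((Finset.range (r-2)).image fun s => T.verts.sup id + 1 + s))
    (T.edges.image fun e =>
      e ∪ ((Finset.range (r-2)).image fun s => T.verts.sup id + 1 + s))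

/-- The chromatic number of a `2`-graph. -/
noncomputable def chrom (F : HGraph 2) : ℕ :=
  sInf {k | ∃ c : ℕ → ℕ, (∀ v ∈ F.verts, c v < k) ∧
    ∀ e ∈ F.edges, ∀ u ∈ e, ∀ v ∈ e, u ≠ v → c u ≠ c v}

/-- A graph is edge-critical if deleting some edge lowers its chromatic number. -/
def EdgeCritical (F : HGraph 2) : Prop :=
  ∃ e ∈ F.edges, chrom (HGraph.ofEdges 2 F.verts (F.edges.erase e)) < chrom F

/-- `H` is semibipartite: the vertex set splits into `V₁ ∪ V₂` so that every edge
has exactly one vertex in `V₁`. -/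
def Semibipartite (r : ℕ) (H : HGraph r) : Prop :=
  ∃ V₁ ⊆ H.verts, ∀ e ∈ H.edges, (e ∩ V₁).card = 1

/-- `H` is a `K_ℓ^r`-subconstruction, i.e. an `ℓ`-partite `r`-graph. -/
def IsKlSub (r ℓ : ℕ) (H : HGraph r) : Prop :=
  ∃ f : ℕ → ℕ, (∀ v ∈ H.verts, f v < ℓ) ∧
    ∀ e ∈ H.edges, ∀ u ∈ e, ∀ v ∈ e, f u = f v → u = v

/-- The Lagrangian `λ(W)` of an `r`-graph `W`, viewing `W` as a pattern. -/
noncomputable def hgLagrangian (r : ℕ) (W : HGraph r) : ℝ :=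
  limUnder atTop fun n : ℕ =>
    ((sSup {m | ∃ G : HGraph r, IsBlowupOf W G ∧ G.verts.card = n ∧ G.edges.card = m} : ℕ) : ℝ)
      / (n.choose r : ℝ)

/-- The `r`-graph `B(r,ℓ+1)`. -/
def BGraph (r ℓ : ℕ) : HGraph r :=
  HGraph.ofEdges r (Finset.Icc 1 (ℓ+1))
    (insert (Finset.Icc 1 r)
      ((Finset.powersetCard r (Finset.Icc 2 (ℓ+1))).filter
        fun e => (e ∩ Finset.Icc 2 r).card ≤ 1))

/-- The `r`-uniform matching of size two, `M_2^r`. -/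
def matching2 (r : ℕ) : HGraph r :=
  HGraph.ofEdges r (Finset.Icc 1 (2*r)) {Finset.Icc 1 r, Finset.Icc (r+1) (2*r)}

/-- The expanded triangle `𝓒_3^{2r}`. -/
def expandedTriangle (r : ℕ) : HGraph (2*r) :=
  HGraph.ofEdges (2*r) (Finset.Icc 1 (3*r))
    {Finset.Icc 1 (2*r), Finset.Icc (r+1) (3*r), Finset.Icc 1 r ∪ Finset.Icc (2*r+1) (3*r)}

/-- The `4`-graph `𝔽_{4,3}`. -/
def F43 : HGraph 4 :=
  HGraph.ofEdges 4 (Finset.Icc 1 7)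
    {({1,2,3,4} : Finset ℕ), {1,2,3,5}, {1,2,3,6}, {1,2,3,7}, {4,5,6,7}}

/-- The `3`-graph `𝔽_{3,2}`. -/
def F32 : HGraph 3 :=
  HGraph.ofEdges 3 (Finset.Icc 1 5)
    {({1,2,3} : Finset ℕ), {1,2,4}, {1,2,5}, {3,4,5}}

/-- `H` contains pairwise vertex-disjoint copies of `F i`, `ts i` many of each. -/
def HasMixedMatching (r k : ℕ) (F : Fin k → HGraph r) (ts : Fin k → ℕ)
    (H : HGraph r) : Prop :=
  ∃ S : (i : Fin k) → Fin (ts i) → Finset ℕ,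
    (∀ i j, S i j ⊆ H.verts ∧ (S i j).card = (F i).verts.card) ∧
    (∀ p q : Σ i : Fin k, Fin (ts i), p ≠ q → Disjoint (S p.1 p.2) (S q.1 q.2)) ∧
    ∀ i j, (F i).IsCopyIn (H.induce (S i j))

/-- `ex(n, ⊔ᵢ tᵢ Fᵢ)`. -/
noncomputable def exMixedN (r k : ℕ) (F : Fin k → HGraph r) (ts : Fin k → ℕ)
    (n : ℕ) : ℕ :=
  sSup {m | ∃ H : HGraph r, H.verts.card = n ∧ ¬ HasMixedMatching r k F ts H ∧
    H.edges.card = m}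

/-- `ex(n, {F₁,…,F_k})`. -/
noncomputable def exFamN (r k : ℕ) (F : Fin k → HGraph r) (n : ℕ) : ℕ :=
  sSup {m | ∃ H : HGraph r, H.verts.card = n ∧ (∀ i, ¬ (F i).IsCopyIn H) ∧
    H.edges.card = m}

section

open Finset

/-!
Let `F` be Fano-free and suppose that all its links are almost as large as in `B₃(m)`. Codegree
counting produces a `K₄`, and the sum of its four links weights the pairs of vertices by subsets of
four colours: three pairwise disjoint pairs inside a quadruple never have distinct representatives,
as these would complete an edge of the `K₄` to a Fano plane. So the mean weight is essentially at
most `3`, and equality forces a bipartition whose crossing pairs have all four colours and whose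
inner pairs have two of them. Carrying this structure along further `K₄`s shows that `F` is
bipartite, so that the maximal Fano-free 3-graphs on `m` vertices are exactly the copies of `B₃(m)`,
and nearly extremal ones have no vertex of degree well above the average.

Now suppose that `F` on `m + t` vertices has at least as many edges as `K_t ⋈ B₃(m)` and no `t + 1`
disjoint Fano planes. If deleting any vertex left `t` disjoint Fano planes, then deleting those
would leave a nearly extremal Fano-free 3-graph, of small maximum degree; hence every vertex of `F`
would have small degree, and `F` too few edges. So some vertex meets every family of `t` disjoint
Fano planes, and the theorem follows by induction on `t`.
-/

/-! ### Sums of the links of a `K₄` -/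

/-- The sets `A, B, C` have no system of distinct representatives. -/
def NoSDR {ι : Type*} (A B C : Finset ι) : Prop :=
  ∀ i ∈ A, ∀ j ∈ B, ∀ k ∈ C, i = j ∨ i = k ∨ j = k

section NoSDR

variable {ι : Type*} {A B C : Finset ι}

theorem NoSDR.hall [DecidableEq ι] (h : NoSDR A B C) :
    A = ∅ ∨ B = ∅ ∨ C = ∅ ∨ #(A ∪ B) ≤ 1 ∨ #(A ∪ C) ≤ 1 ∨ #(B ∪ C) ≤ 1 ∨ #(A ∪ B ∪ C) ≤ 2 := by
  have not_hall : ¬ ∀ I : Finset (Fin 3), #I ≤ #(I.biUnion ![A, B, C]) := by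
    rw [all_card_le_biUnion_card_iff_exists_injective]
    rintro ⟨f, f_inj, hf⟩
    rcases h (f 0) (hf 0) (f 1) (hf 1) (f 2) (hf 2) with e | e | e <;> simpa using f_inj e
  contrapose! not_hall
  obtain ⟨hA, hB, hC, hAB, hAC, hBC, hABC⟩ := not_hall
  have hI (I : Finset (Fin 3)) : I = ∅ ∨ I = {0} ∨ I = {1} ∨ I = {2} ∨ I = {0, 1} ∨ I = {0, 2} ∨
      I = {1, 2} ∨ I = {0, 1, 2} := by
    revert I; decide
  intro I
  rcases hI I with rfl | rfl | rfl | rfl | rfl | rfl | rfl | rfl <;>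
    simp [biUnion_insert, ← union_assoc, hA, hB, hC, Nat.succ_le_of_lt hAB,
      Nat.succ_le_of_lt hAC, Nat.succ_le_of_lt hBC, Nat.succ_le_of_lt hABC]

theorem NoSDR.card (h : NoSDR A B C) :
    #A = 0 ∨ #B = 0 ∨ #C = 0 ∨ #A ≤ 1 ∧ #B ≤ 1 ∨ #A ≤ 1 ∧ #C ≤ 1 ∨ #B ≤ 1 ∧ #C ≤ 1 ∨
      #A ≤ 2 ∧ #B ≤ 2 ∧ #C ≤ 2 := by
  classical
  have hAB := card_le_card (subset_union_left : A ⊆ A ∪ B)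
  have hBA := card_le_card (subset_union_right : B ⊆ A ∪ B)
  have hAC := card_le_card (subset_union_left : A ⊆ A ∪ C)
  have hCA := card_le_card (subset_union_right : C ⊆ A ∪ C)
  have hBC := card_le_card (subset_union_left : B ⊆ B ∪ C)
  have hCB := card_le_card (subset_union_right : C ⊆ B ∪ C)
  have hABC := card_le_card (subset_union_left : A ∪ B ⊆ A ∪ B ∪ C)
  have hC := card_le_card (subset_union_right : C ⊆ A ∪ B ∪ C)
  have := h.hall
  simp only [← card_eq_zero] at this
  omega

theorem NoSDR.pair_eq_pair_of_compl {a a' b b' c c' : Fin 4}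
    (h : NoSDR {a, a'}ᶜ {b, b'}ᶜ {c, c'}ᶜ) :
    a ≠ a' ∧ ({b, b'} : Finset (Fin 4)) = {a, a'} ∧ ({c, c'} : Finset (Fin 4)) = {a, a'} := by
  have two_le (i j : Fin 4) : 2 ≤ #({i, j}ᶜ : Finset (Fin 4)) := by
    have := card_le_two (a := i) (b := j)
    rw [card_compl, Fintype.card_fin]
    omega
  set U : Finset (Fin 4) := {a, a'}ᶜ ∪ {b, b'}ᶜ ∪ {c, c'}ᶜ with hU
  have hU2 : #U ≤ 2 := by
    have two_le_union (i j : Fin 4) (X : Finset (Fin 4)) :=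
      (two_le i j).trans (card_le_card (subset_union_left : _ ⊆ {i, j}ᶜ ∪ X))
    have := two_le_union a a' {b, b'}ᶜ
    have := two_le_union a a' {c, c'}ᶜ
    have := two_le_union b b' {c, c'}ᶜ
    have := two_le a a'
    have := two_le b b'
    have := two_le c c'
    have := h.hall
    simp only [← card_eq_zero, ← hU] at this
    omega
  have eq_U {i j : Fin 4} (hij : {i, j}ᶜ ⊆ U) : ({i, j}ᶜ : Finset (Fin 4)) = U :=
    eq_of_subset_of_card_le hij (hU2.trans (two_le i j))
  have ha : {a, a'}ᶜ = U := eq_U (subset_union_left.trans subset_union_left)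
  have hb : {b, b'}ᶜ = U := eq_U (subset_union_right.trans subset_union_left)
  have hc : {c, c'}ᶜ = U := eq_U subset_union_right
  refine ⟨?_, compl_injective (hb.trans ha.symm), compl_injective (hc.trans ha.symm)⟩
  rintro rfl
  rw [← ha, pair_eq_singleton, card_compl, card_singleton, Fintype.card_fin] at hU2
  omega

end NoSDR

section Clique

theorem exists_pairwise_of_card_filter_not_lt {α : Type*} {U : Finset α} (hU : U.Nonempty)
    {R : α → α → Prop} [DecidableRel R] (hR : Std.Symm R) {k : ℕ}
    (h : ∀ x ∈ U, k * #{y ∈ U | ¬R x y} < #U) :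
    ∃ v : Fin (k + 1) → α, (∀ i, v i ∈ U) ∧ Pairwise (fun i j => R (v i) (v j)) := by
  suffices ∀ m ≤ k, ∃ v : Fin (m + 1) → α, (∀ i, v i ∈ U) ∧
      Pairwise (fun i j => R (v i) (v j)) from this k le_rfl
  classical
  intro m hm
  induction m with
  | zero =>
    obtain ⟨a, ha⟩ := hU
    exact ⟨fun _ => a, fun _ => ha, fun i j hij => (hij (by omega)).elim⟩
  | succ m ih =>
    obtain ⟨v, hvU, hv⟩ := ih (by omega)
    have card_lt : #(univ.biUnion fun i => {y ∈ U | ¬R (v i) y}) < #U := by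
      have hle (i : Fin (m + 1)) : (m + 1) * #{y ∈ U | ¬R (v i) y} ≤ #U - 1 :=
        (Nat.mul_le_mul_right _ hm).trans (Nat.le_sub_one_of_lt (h _ (hvU i)))
      have hsum : (m + 1) * ∑ i, #{y ∈ U | ¬R (v i) y} ≤ (m + 1) * (#U - 1) := by
        rw [mul_sum]
        exact (sum_le_card_nsmul _ _ _ fun i _ => hle i).trans (by simp)
      have := card_biUnion_le (s := univ) (t := fun i => {y ∈ U | ¬R (v i) y})
      have := Nat.le_of_mul_le_mul_left hsum m.succ_pos
      have := hU.card_pos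
      omega
    obtain ⟨x, hx, hxv⟩ := exists_mem_notMem_of_card_lt_card card_lt
    simp only [mem_biUnion, mem_univ, true_and, mem_filter, hx, not_exists, not_not] at hxv
    refine ⟨Fin.cons x v, Fin.cases hx hvU, ?_⟩
    intro i j hij
    cases i using Fin.cases <;> cases j using Fin.cases
    · exact (hij rfl).elim
    · exact hR.symm _ _ (hxv _)
    · exact hxv _
    · exact hv (by simpa using hij)

end Clique

section Edge

variable {α : Type*} [DecidableEq α]

/-- The triple `x, y, z` is an edge of the 3-graph with edge set `F`. Coincidences among `x, y, z`
are excluded only when all members of `F` have three elements. -/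
def Edge (F : Finset (Finset α)) (x y z : α) : Prop := {x, y, z} ∈ F

instance (F : Finset (Finset α)) (x y z : α) : Decidable (Edge F x y z) :=
  inferInstanceAs (Decidable (_ ∈ _))

variable {F G : Finset (Finset α)} {x y z : α}

theorem edge_left_comm : Edge F x y z ↔ Edge F y x z := by
  rw [Edge, insert_comm, Edge]

theorem edge_right_comm : Edge F x y z ↔ Edge F x z y := by
  rw [Edge, pair_comm, Edge]

theorem not_edge_right_self (hF : (F : Set (Finset α)).Sized 3) : ¬Edge F x y y := by
  intro h
  have := hF h
  rw [pair_eq_singleton] at this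
  have := card_le_two (a := x) (b := y)
  omega

/-- A Fano plane in `F`: the points `p, q, r` form a line, and the three pairs of opposite sides of
the quadrangle `x, y, z, w` meet in `p`, `q` and `r` respectively. -/
def IsFano (F : Finset (Finset α)) (p q r x y z w : α) : Prop :=
  Edge F p q r ∧ Edge F p x y ∧ Edge F p z w ∧ Edge F q x z ∧ Edge F q y w ∧ Edge F r x w ∧
    Edge F r y z

theorem IsFano.mono {p q r x y z w : α} (h : G ⊆ F) (hG : IsFano G p q r x y z w) :
    IsFano F p q r x y z w := by
  obtain ⟨h₁, h₂, h₃, h₄, h₅, h₆, h₇⟩ := hG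
  exact ⟨h h₁, h h₂, h h₃, h h₄, h h₅, h h₆, h h₇⟩

/-- `F` is the edge set of a 3-graph containing no Fano plane. -/
structure FanoFree (F : Finset (Finset α)) : Prop where
  sized : (F : Set (Finset α)).Sized 3
  not_isFano : ∀ p q r x y z w, ¬IsFano F p q r x y z w

/-- The vertices `s 0, …, s 3` span a complete 3-graph in `F`. -/
def IsK4 (F : Finset (Finset α)) (s : Fin 4 → α) : Prop :=
  ∀ i j k, i ≠ j → i ≠ k → j ≠ k → Edge F (s i) (s j) (s k)

end Edge

section Weight

variable {α : Type*} [DecidableEq α] {F : Finset (Finset α)} {s : Fin 4 → α}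

/-- The links of `s 0, …, s 3` that contain the pair `x, y`. -/
def colours (F : Finset (Finset α)) (s : Fin 4 → α) (x y : α) : Finset (Fin 4) :=
  {i | Edge F (s i) x y}

/-- The multiplicity of the pair `x, y` in the sum of the links of `s 0, …, s 3`. -/
def weight (F : Finset (Finset α)) (s : Fin 4 → α) (x y : α) : ℕ := #(colours F s x y)

theorem mem_colours {x y : α} {i : Fin 4} : i ∈ colours F s x y ↔ Edge F (s i) x y := by
  simp [colours]

theorem colours_comm (x y : α) : colours F s x y = colours F s y x := by
  ext; simp only [mem_colours, edge_right_comm]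

theorem weight_comm (x y : α) : weight F s x y = weight F s y x := by
  rw [weight, colours_comm, weight]

theorem weight_self (hF : (F : Set (Finset α)).Sized 3) (x : α) : weight F s x x = 0 :=
  card_eq_zero.2 <| filter_eq_empty_iff.2 fun _ _ => not_edge_right_self hF

theorem weight_le_four (x y : α) : weight F s x y ≤ 4 := card_le_univ _

theorem colours_eq_univ {x y : α} (h : weight F s x y = 4) : colours F s x y = univ :=
  (card_eq_iff_eq_univ _).1 h

theorem exists_colours_eq_compl {x y : α} (h : weight F s x y = 3) :
    ∃ i, colours F s x y = {i}ᶜ := by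
  have : #(colours F s x y)ᶜ = 1 := by rw [card_compl, ← weight, h, Fintype.card_fin]
  obtain ⟨i, hi⟩ := card_eq_one.1 this
  exact ⟨i, by rw [← hi, compl_compl]⟩

theorem weight_add_weight_le (x y z u : α) :
    weight F s x y + weight F s z u ≤ 4 + #(colours F s x y ∩ colours F s z u) := by
  rw [weight, weight, ← card_union_add_card_inter]
  exact Nat.add_le_add_right (card_le_univ _) _

-- A system of distinct representatives would complete an edge of the `K₄` to a Fano plane.
theorem FanoFree.noSDR_colours (hF : FanoFree F) (hs : IsK4 F s) (x y z u : α) :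
    NoSDR (colours F s x y ∩ colours F s z u) (colours F s x z ∩ colours F s y u)
      (colours F s x u ∩ colours F s y z) := by
  intro i hi j hj k hk
  simp only [mem_inter, mem_colours] at hi hj hk
  by_contra! h
  exact hF.not_isFano (s i) (s j) (s k) x y z u
    ⟨hs i j k h.1 h.2.1 h.2.2, hi.1, hi.2, hj.1, hj.2, hk.1, hk.2⟩

theorem FanoFree.weight_quadruple_le (hF : FanoFree F) (hs : IsK4 F s) (x y z u : α) :
    weight F s x y + weight F s z u + (weight F s x z + weight F s y u) +
      (weight F s x u + weight F s y z) ≤ 20 := by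
  have h := (hF.noSDR_colours hs x y z u).card
  have hi (I : Finset (Fin 4)) : #I ≤ 4 := card_le_univ I
  have h₁ := weight_add_weight_le (F := F) (s := s) x y z u
  have h₂ := weight_add_weight_le (F := F) (s := s) x z y u
  have h₃ := weight_add_weight_le (F := F) (s := s) x u y z
  have := hi (colours F s x y ∩ colours F s z u)
  have := hi (colours F s x z ∩ colours F s y u)
  have := hi (colours F s x u ∩ colours F s y z)
  omega

theorem FanoFree.weight_heavy_triangle_le (hF : FanoFree F) (hs : IsK4 F s) {x y z : α}
    (hxy : weight F s x y = 4) (hxz : weight F s x z = 4) (hyz : 3 ≤ weight F s y z) (u : α) :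
    3 * (weight F s x u + weight F s y u + weight F s z u) + weight F s x u ≤ 28 := by
  have h := (hF.noSDR_colours hs x y z u).card
  rw [colours_eq_univ hxy, colours_eq_univ hxz, univ_inter, univ_inter, ← weight, ← weight] at h
  have := weight_add_weight_le (F := F) (s := s) x u y z
  have := weight_le_four (F := F) (s := s) x u
  have := weight_le_four (F := F) (s := s) y u
  have := weight_le_four (F := F) (s := s) z u
  omega

theorem FanoFree.disjoint_colours (hF : FanoFree F) (hs : IsK4 F s) {x y z u : α}
    (hxz : weight F s x z = 4) (hyu : weight F s y u = 4) (hxu : weight F s x u = 4)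
    (hyz : weight F s y z = 4) : Disjoint (colours F s x y) (colours F s z u) := by
  have h := (hF.noSDR_colours hs x y z u).card
  rw [colours_eq_univ hxz, colours_eq_univ hyu, colours_eq_univ hxu, colours_eq_univ hyz,
    inter_self, card_univ, Fintype.card_fin] at h
  rw [disjoint_iff_inter_eq_empty, ← card_eq_zero]
  omega

theorem FanoFree.weight_le_two_of_path (hF : FanoFree F) (hs : IsK4 F s) {x y z u : α}
    (hxz : weight F s x z = 4) (hyz : weight F s y z = 4) (hxu : weight F s x u = 3)
    (hzu : weight F s z u = 3) (hxy : 2 ≤ weight F s x y) : weight F s y u ≤ 2 := by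
  have h := (hF.noSDR_colours hs x y z u).card
  rw [colours_eq_univ hxz, colours_eq_univ hyz, univ_inter, inter_univ, ← weight, ← weight] at h
  have := weight_add_weight_le (F := F) (s := s) x y z u
  omega

theorem FanoFree.not_pairwise_weight_eq_three (hF : FanoFree F) (hs : IsK4 F s) (v : Fin 5 → α) :
    ¬Pairwise fun i j => weight F s (v i) (v j) = 3 := by
  intro hv
  choose! m hm using fun i j (hij : i ≠ j) => exists_colours_eq_compl (hv hij)
  have m_pairs (i j k l : Fin 5) (h : [i, j, k, l].Nodup) : m i j ≠ m k l ∧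
      ({m i k, m j l} : Finset (Fin 4)) = {m i j, m k l} ∧
      ({m i l, m j k} : Finset (Fin 4)) = {m i j, m k l} := by
    apply NoSDR.pair_eq_pair_of_compl
    obtain ⟨⟨hij, hik, hil⟩, ⟨hjk, hjl⟩, hkl⟩ :
        (i ≠ j ∧ i ≠ k ∧ i ≠ l) ∧ (j ≠ k ∧ j ≠ l) ∧ k ≠ l := by simpa using h
    have := hF.noSDR_colours hs (v i) (v j) (v k) (v l)
    simpa only [hm _ _ hij, hm _ _ hik, hm _ _ hil, hm _ _ hjk, hm _ _ hjl, hm _ _ hkl,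
      ← compl_union, ← insert_eq] using this
  simp only [← coe_inj, coe_pair, Set.pair_eq_pair_iff] at m_pairs
  have h₀ := m_pairs 1 2 3 4 (by decide)
  have h₁ := m_pairs 0 2 3 4 (by decide)
  have h₂ := m_pairs 0 1 3 4 (by decide)
  have h₃ := m_pairs 0 1 2 4 (by decide)
  have h₄ := m_pairs 0 1 2 3 (by decide)
  clear m_pairs hm hv
  grind

end Weight

section WeightSum

variable {α : Type*} [DecidableEq α] {F : Finset (Finset α)} {s : Fin 4 → α} {U W : Finset α}

/-- The weighted degree of `x` into `U`. -/
def weightDeg (F : Finset (Finset α)) (s : Fin 4 → α) (U : Finset α) (x : α) : ℕ :=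
  ∑ y ∈ U, weight F s x y

/-- Twice the total weight of the pairs in `U`. -/
def weightSum (F : Finset (Finset α)) (s : Fin 4 → α) (U : Finset α) : ℕ :=
  ∑ x ∈ U, weightDeg F s U x

theorem weightDeg_union (h : Disjoint U W) (x : α) :
    weightDeg F s (U ∪ W) x = weightDeg F s U x + weightDeg F s W x :=
  sum_union h

theorem sum_weightDeg_comm : ∑ x ∈ U, weightDeg F s W x = ∑ x ∈ W, weightDeg F s U x := by
  simp only [weightDeg]
  rw [sum_comm]
  exact sum_congr rfl fun x _ => sum_congr rfl fun y _ => weight_comm y x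

theorem weightSum_union (h : Disjoint U W) :
    weightSum F s (U ∪ W) = weightSum F s U + 2 * ∑ x ∈ U, weightDeg F s W x + weightSum F s W := by
  have hW : ∑ x ∈ W, weightDeg F s U x = ∑ x ∈ U, weightDeg F s W x := sum_weightDeg_comm
  simp only [weightSum, sum_union h, weightDeg_union h, sum_add_distrib, hW]
  ring

theorem weightSum_le_of_card_le_four (hF : (F : Set (Finset α)).Sized 3) (hW : #W ≤ 4) :
    weightSum F s W ≤ 3 * #W ^ 2 := by
  have deg_le : ∀ x ∈ W, weightDeg F s W x ≤ (#W - 1) * 4 := by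
    intro x hx
    rw [weightDeg, ← sum_erase W (weight_self hF x), ← card_erase_of_mem hx]
    exact sum_le_card_nsmul _ _ _ fun y _ => weight_le_four x y
  have := sum_le_card_nsmul _ _ _ deg_le
  rw [← weightSum] at this
  interval_cases #W <;> simp_all <;> omega

theorem weightSum_le_of_sdiff (hWU : W ⊆ U) (hW : weightSum F s W ≤ 3 * #W ^ 2)
    (hdeg : ∀ q ∈ U \ W, weightDeg F s W q ≤ 3 * #W)
    (hUW : weightSum F s (U \ W) ≤ 3 * #(U \ W) ^ 2) : weightSum F s U ≤ 3 * #U ^ 2 := by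
  have hcross := sum_le_card_nsmul _ _ _ hdeg
  have hcard := card_sdiff_add_card_eq_card hWU
  rw [← sdiff_union_of_subset hWU, weightSum_union sdiff_disjoint, sdiff_union_of_subset hWU,
    ← hcard]
  rw [smul_eq_mul] at hcross
  nlinarith

theorem FanoFree.exists_sparse_subset (hF : FanoFree F) (hs : IsK4 F s) {x y : α} (hx : x ∈ U)
    (hy : y ∈ U) (hxy : weight F s x y = 4) :
    ∃ W ⊆ U, W.Nonempty ∧ #W ≤ 4 ∧ ∀ q ∈ U \ W, weightDeg F s W q ≤ 3 * #W := by
  have hne : x ≠ y := by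
    rintro rfl
    rw [weight_self hF.sized] at hxy
    omega
  by_cases h : ∃ z ∈ U, 7 ≤ weight F s z x + weight F s z y
  · obtain ⟨z, hz, hsum⟩ := h
    have := weight_comm (F := F) (s := s) x z
    have := weight_comm (F := F) (s := s) y z
    have hzx : z ≠ x := by
      rintro rfl
      have := weight_self (s := s) hF.sized z
      omega
    have hzy : z ≠ y := by
      rintro rfl
      have := weight_self (s := s) hF.sized z
      have := weight_le_four (F := F) (s := s) z x
      omega
    refine ⟨{z, x, y}, by grind, by simp, card_le_three.trans (by omega), fun q _ => ?_⟩
    have := hF.weight_quadruple_le hs x y z q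
    have := weight_comm (F := F) (s := s) q x
    have := weight_comm (F := F) (s := s) q y
    have := weight_comm (F := F) (s := s) q z
    rw [weightDeg, sum_insert (by simp [hzx, hzy]), sum_pair hne,
      card_eq_three.2 ⟨z, x, y, hzx, hzy, hne, rfl⟩]
    omega
  · push Not at h
    refine ⟨{x, y}, by grind, by simp, card_le_two.trans (by omega), fun q hq => ?_⟩
    rw [weightDeg, sum_pair hne, card_pair hne]
    exact Nat.le_of_lt_succ (h q (Finset.mem_sdiff.1 hq).1)

theorem FanoFree.weightSum_le (hF : FanoFree F) (hs : IsK4 F s) (U : Finset α) :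
    weightSum F s U ≤ 3 * #U ^ 2 := by
  induction U using Finset.strongInduction with
  | H U ih =>
    by_cases h : ∃ x ∈ U, ∃ y ∈ U, weight F s x y = 4
    · obtain ⟨x, hx, y, hy, hxy⟩ := h
      obtain ⟨W, hWU, hW, hW4, hdeg⟩ := hF.exists_sparse_subset hs hx hy hxy
      exact weightSum_le_of_sdiff hWU (weightSum_le_of_card_le_four hF.sized hW4) hdeg
        (ih _ (sdiff_ssubset hWU hW))
    · push Not at h
      have le_three : ∀ x ∈ U, ∀ y ∈ U, weight F s x y ≤ 3 := fun x hx y hy =>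
        Nat.le_of_lt_succ (lt_of_le_of_ne (weight_le_four x y) (h x hx y hy))
      calc weightSum F s U ≤ #U • (#U • 3) := sum_le_card_nsmul _ _ _ fun x hx =>
            sum_le_card_nsmul _ _ _ (le_three x hx)
        _ = 3 * #U ^ 2 := by simp only [smul_eq_mul]; ring

end WeightSum

/-! ### Near-extremal sums of links -/

section NearExtremal

variable {α : Type*} [DecidableEq α] {F : Finset (Finset α)} {s : Fin 4 → α} {U : Finset α}
  {δ : ℝ} {x y z : α}

/-- The sum of the links of a `K₄` in a Fano-free 3-graph, restricted to `U`, has minimum degree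
close to the extremal value `3 |U|`. -/
structure NearExtremal (F : Finset (Finset α)) (s : Fin 4 → α) (U : Finset α) (δ : ℝ) : Prop where
  fanoFree : FanoFree F
  isK4 : IsK4 F s
  delta_le : δ ≤ 1 / 1000
  le_weightDeg : ∀ x ∈ U, (3 - δ) * #U ≤ weightDeg F s U x

namespace NearExtremal

theorem weight_le_two (h : NearExtremal F s U δ) (hx : x ∈ U) (hy : y ∈ U) (hz : z ∈ U)
    (hxy : weight F s x y = 4) (hxz : weight F s x z = 4) : weight F s y z ≤ 2 := by
  by_contra! hyz
  have hsum : 3 * (weightDeg F s U x + weightDeg F s U y + weightDeg F s U z) +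
      weightDeg F s U x ≤ #U * 28 := by
    simp only [weightDeg, ← sum_add_distrib, mul_sum]
    exact sum_le_card_nsmul _ _ _ fun q _ =>
      h.fanoFree.weight_heavy_triangle_le h.isK4 hxy hxz hyz q
  have hU : (0 : ℝ) < #U := mod_cast card_pos.2 ⟨x, hx⟩
  replace hsum := (Nat.cast_le (α := ℝ)).2 hsum
  push_cast at hsum
  nlinarith [h.le_weightDeg x hx, h.le_weightDeg y hy, h.le_weightDeg z hz, h.delta_le]

theorem weight_add_weight_le_six (h : NearExtremal F s U δ) (hx : x ∈ U) (hy : y ∈ U) (hz : z ∈ U)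
    (hxy : weight F s x y = 4) : weight F s x z + weight F s y z ≤ 6 := by
  have hxz := weight_le_four (F := F) (s := s) x z
  have hyz := weight_le_four (F := F) (s := s) y z
  have of_left := h.weight_le_two hx hy hz hxy
  have of_right := h.weight_le_two hy hx hz (by rwa [weight_comm])
  omega

theorem exists_card_lt_heavy (h : NearExtremal F s U δ) (hU : U.Nonempty) :
    ∃ x ∈ U, (#U : ℝ) / 10 < #{y ∈ U | weight F s x y = 4} := by
  by_contra! hfew
  have few_ne_three : ∀ x ∈ U, 4 * #{y ∈ U | ¬weight F s x y = 3} < #U := by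
    intro x hx
    have hsum : weightDeg F s U x + #{y ∈ U | ¬weight F s x y = 3} ≤
        #U * 3 + 2 * #{y ∈ U | weight F s x y = 4} := by
      rw [card_filter, card_filter, mul_sum, ← smul_eq_mul, ← sum_const]
      simp only [weightDeg, ← sum_add_distrib]
      refine sum_le_sum fun y _ => ?_
      have := weight_le_four (F := F) (s := s) x y
      split_ifs <;> omega
    have hpos : (0 : ℝ) < #U := mod_cast hU.card_pos
    replace hsum := (Nat.cast_le (α := ℝ)).2 hsum
    rw [← Nat.cast_lt (α := ℝ)]
    push_cast at hsum ⊢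
    nlinarith [h.le_weightDeg x hx, hfew x hx, h.delta_le]
  obtain ⟨v, -, hv⟩ := exists_pairwise_of_card_filter_not_lt hU
    ⟨fun x y hxy => (weight_comm y x).trans hxy⟩ few_ne_three
  exact h.fanoFree.not_pairwise_weight_eq_three h.isK4 v hv

theorem card_sum_le_five_le (h : NearExtremal F s U δ) (hx : x ∈ U) (hy : y ∈ U)
    (hxy : weight F s x y = 4) :
    (#{q ∈ U | weight F s x q + weight F s y q ≤ 5} : ℝ) ≤ 2 * δ * #U := by
  have hsum : weightDeg F s U x + weightDeg F s U y +
      #{q ∈ U | weight F s x q + weight F s y q ≤ 5} ≤ #U * 6 := by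
    rw [card_filter, ← smul_eq_mul, ← sum_const]
    simp only [weightDeg, ← sum_add_distrib]
    refine sum_le_sum fun q hq => ?_
    have := h.weight_add_weight_le_six hx hy hq hxy
    split_ifs <;> omega
  replace hsum := (Nat.cast_le (α := ℝ)).2 hsum
  push_cast at hsum
  linarith [h.le_weightDeg x hx, h.le_weightDeg y hy]

theorem weight_add_ite_le (h : NearExtremal F s U δ) (hx : x ∈ U) (hy : y ∈ U) (hz : z ∈ U)
    (hxy : weight F s x y = 4) (hyz : weight F s y z = 4) {q : α} (hq : q ∈ U) :
    weight F s z q + (if weight F s y q = 4 then 1 else 0) ≤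
      3 + (if weight F s x q = 4 then 1 else 0) +
        (if weight F s x q + weight F s y q ≤ 5 then 1 else 0) := by
  have := h.weight_add_weight_le_six hx hy hq hxy
  have := h.weight_add_weight_le_six hy hz hq hyz
  have := weight_le_four (F := F) (s := s) z q
  have := weight_le_four (F := F) (s := s) x q
  split_ifs <;> omega

theorem card_heavy_le (h : NearExtremal F s U δ) (hx : x ∈ U) (hy : y ∈ U)
    (hxy : weight F s x y = 4) : (#{q ∈ U | weight F s y q = 4} : ℝ) ≤
      #{q ∈ U | weight F s x q = 4} + 3 * δ * #U := by
  have hsum : weightDeg F s U x + #{q ∈ U | weight F s y q = 4} ≤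
      #U * 3 + #{q ∈ U | weight F s x q = 4} +
        #{q ∈ U | weight F s x q + weight F s y q ≤ 5} := by
    rw [card_filter, card_filter, card_filter, ← smul_eq_mul, ← sum_const]
    simp only [weightDeg, ← sum_add_distrib]
    exact sum_le_sum fun q hq =>
      h.weight_add_ite_le hx hy hx hxy (by rwa [weight_comm]) hq
  replace hsum := (Nat.cast_le (α := ℝ)).2 hsum
  push_cast at hsum
  linarith [h.le_weightDeg x hx, h.card_sum_le_five_le hx hy hxy]

theorem card_both_three_le (h : NearExtremal F s U δ) (hx : x ∈ U) (hy : y ∈ U)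
    (hxy : weight F s x y = 4) (hlarge : 2 * δ * #U < #{q ∈ U | weight F s y q = 4}) :
    (#{q ∈ U | weight F s x q = 3 ∧ weight F s y q = 3} : ℝ) ≤ 6 * δ * #U := by
  have hfive := h.card_sum_le_five_le hx hy hxy
  obtain ⟨u, hu, hxyu⟩ : ∃ u ∈ {q ∈ U | weight F s y q = 4},
      u ∉ ({q ∈ U | weight F s x q + weight F s y q ≤ 5} : Finset α) :=
    exists_mem_notMem_of_card_lt_card (by exact_mod_cast hfive.trans_lt hlarge)
  obtain ⟨huU, hyu⟩ := mem_filter.1 hu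
  simp only [mem_filter, huU, true_and] at hxyu
  have hxu : weight F s x u = 2 := by
    have := h.weight_add_weight_le_six hx hy huU hxy
    omega
  have hsum : weightDeg F s U u + #{q ∈ U | weight F s y q = 4} +
      #{q ∈ U | weight F s x q = 3 ∧ weight F s y q = 3} ≤
      #U * 3 + #{q ∈ U | weight F s x q = 4} +
        #{q ∈ U | weight F s x q + weight F s y q ≤ 5} := by
    rw [card_filter, card_filter, card_filter, card_filter, ← smul_eq_mul, ← sum_const]
    simp only [weightDeg, ← sum_add_distrib]
    refine sum_le_sum fun q hq => ?_
    have hle := h.weight_add_ite_le hx hy huU hxy hyu hq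
    by_cases hthree : weight F s x q = 3 ∧ weight F s y q = 3
    · have := h.fanoFree.weight_le_two_of_path h.isK4 hxy (by rwa [weight_comm]) hthree.1 hthree.2
        hxu.ge
      rw [if_pos hthree]
      split_ifs <;> omega
    · rwa [if_neg hthree]
  replace hsum := (Nat.cast_le (α := ℝ)).2 hsum
  push_cast at hsum
  linarith [h.le_weightDeg u huU, h.card_heavy_le hy hx (by rwa [weight_comm])]

theorem card_ne_add_card_ne_le (h : NearExtremal F s U δ) (hx : x ∈ U) (hy : y ∈ U)
    (hxy : weight F s x y = 4)
    (hlarge : (1 / 2 - 6 * δ) * #U ≤ #{q ∈ U | weight F s y q = 4})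
    (hz : z ∈ ({q ∈ U | weight F s y q = 4} : Finset α)) :
    (#{q ∈ {q ∈ U | weight F s y q = 4} | weight F s z q ≠ 2} : ℝ) +
      #{q ∈ {q ∈ U | weight F s x q = 4} | weight F s z q ≠ 4} ≤ 13 * δ * #U := by
  obtain ⟨hzU, hyz⟩ := mem_filter.1 hz
  have hsum : weightDeg F s U z + 2 * #{q ∈ U | weight F s y q = 4} +
      #{q ∈ {q ∈ U | weight F s y q = 4} | weight F s z q ≠ 2} +
      #{q ∈ {q ∈ U | weight F s x q = 4} | weight F s z q ≠ 4} ≤ #U * 4 := by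
    rw [filter_filter, filter_filter, card_filter, card_filter, card_filter, mul_sum,
      ← smul_eq_mul (a := #U), ← sum_const]
    simp only [weightDeg, ← sum_add_distrib]
    refine sum_le_sum fun q hq => ?_
    have := weight_le_four (F := F) (s := s) z q
    have := h.weight_add_weight_le_six hx hy hq hxy
    have := h.weight_le_two hy hzU hq hyz
    split_ifs <;> omega
  replace hsum := (Nat.cast_le (α := ℝ)).2 hsum
  push_cast at hsum
  linarith [h.le_weightDeg z hzU]

end NearExtremal

/-- In the sum of the links of `s 0, …, s 3`, all but at most `β` of the pairs at each vertex have
weight `2` inside `A` and inside `B`, and weight `4` between `A` and `B`. -/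
structure WeightSplit (F : Finset (Finset α)) (s : Fin 4 → α) (A B : Finset α) (β : ℝ) :
    Prop where
  disjoint : Disjoint A B
  inner_left : ∀ z ∈ A, (#{q ∈ A | weight F s z q ≠ 2} : ℝ) ≤ β
  cross_left : ∀ z ∈ A, (#{q ∈ B | weight F s z q ≠ 4} : ℝ) ≤ β
  inner_right : ∀ z ∈ B, (#{q ∈ B | weight F s z q ≠ 2} : ℝ) ≤ β
  cross_right : ∀ z ∈ B, (#{q ∈ A | weight F s z q ≠ 4} : ℝ) ≤ β

namespace NearExtremal

theorem card_le_of_heavy (h : NearExtremal F s U δ) (hx : x ∈ U) (hy : y ∈ U)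
    (hxy : weight F s x y = 4) (hlarge : 2 * δ * #U < #{q ∈ U | weight F s y q = 4}) :
    (1 - 8 * δ) * #U ≤
      #{q ∈ U | weight F s y q = 4} + (#{q ∈ U | weight F s x q = 4} : ℝ) := by
  have hcover : #U ≤ #{q ∈ U | weight F s y q = 4} + #{q ∈ U | weight F s x q = 4} +
      #{q ∈ U | weight F s x q = 3 ∧ weight F s y q = 3} +
      #{q ∈ U | weight F s x q + weight F s y q ≤ 5} := by
    simp only [card_filter, ← sum_add_distrib]
    rw [card_eq_sum_ones]
    refine sum_le_sum fun q hq => ?_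
    have := h.weight_add_weight_le_six hx hy hq hxy
    have := weight_le_four (F := F) (s := s) x q
    have := weight_le_four (F := F) (s := s) y q
    split_ifs <;> omega
  replace hcover := (Nat.cast_le (α := ℝ)).2 hcover
  push_cast at hcover
  linarith [h.card_sum_le_five_le hx hy hxy, h.card_both_three_le hx hy hxy hlarge]

theorem exists_weightSplit (h : NearExtremal F s U δ) (hU : U.Nonempty) :
    ∃ A ⊆ U, ∃ B ⊆ U, (1 / 2 - 6 * δ) * #U ≤ #A ∧ (1 / 2 - 6 * δ) * #U ≤ #B ∧
      WeightSplit F s A B (13 * δ * #U) := by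
  obtain ⟨x, hx, hxlarge⟩ := h.exists_card_lt_heavy hU
  have hpos : (0 : ℝ) < #U := mod_cast hU.card_pos
  have hδ := h.delta_le
  obtain ⟨y, hy⟩ : ({q ∈ U | weight F s x q = 4} : Finset α).Nonempty := by
    rw [← card_pos]
    have := (div_pos hpos (by norm_num : (0 : ℝ) < 10)).trans hxlarge
    exact_mod_cast this
  obtain ⟨hy, hxy⟩ := mem_filter.1 hy
  have hyx : weight F s y x = 4 := by rwa [weight_comm]
  have hle := h.card_heavy_le hx hy hxy
  have hge := h.card_heavy_le hy hx hyx
  have hcover := h.card_le_of_heavy hx hy hxy (by nlinarith)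
  have hA : (1 / 2 - 6 * δ) * #U ≤ #{q ∈ U | weight F s y q = 4} := by nlinarith
  have hB : (1 / 2 - 6 * δ) * #U ≤ #{q ∈ U | weight F s x q = 4} := by nlinarith
  have split_left := fun z => h.card_ne_add_card_ne_le (z := z) hx hy hxy hA
  have split_right := fun z => h.card_ne_add_card_ne_le (z := z) hy hx hyx hB
  refine ⟨_, filter_subset _ _, _, filter_subset _ _, hA, hB, ?_,
    fun z hz => (le_add_of_nonneg_right (Nat.cast_nonneg _)).trans (split_left z hz),
    fun z hz => (le_add_of_nonneg_left (Nat.cast_nonneg _)).trans (split_left z hz),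
    fun z hz => (le_add_of_nonneg_right (Nat.cast_nonneg _)).trans (split_right z hz),
    fun z hz => (le_add_of_nonneg_left (Nat.cast_nonneg _)).trans (split_right z hz)⟩
  refine disjoint_filter.2 fun q hq hyq hxq => ?_
  have := h.weight_add_weight_le_six hx hy hq hxy
  omega

end NearExtremal

end NearExtremal

/-! ### Colour splits and links -/

section Link

variable {α : Type*} [DecidableEq α] {F : Finset (Finset α)} {s : Fin 4 → α} {V A : Finset α}
  {δ κ : ℝ}

/-- The number of ordered pairs of vertices of `V` in the link of `x`. -/
def linkDeg (F : Finset (Finset α)) (V : Finset α) (x : α) : ℕ :=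
  #{p ∈ V ×ˢ V | Edge F x p.1 p.2}

/-- The number of ordered pairs of vertices of `V` in which the link of `x` differs from the set of
all pairs not contained in `A`. -/
def linkDefect (F : Finset (Finset α)) (V A : Finset α) (x : α) : ℕ :=
  #{p ∈ V ×ˢ V | ¬(Edge F x p.1 p.2 ↔ ¬(p.1 ∈ A ∧ p.2 ∈ A))}

/-- The link of `x` is `κ`-close to the set of all pairs not contained in `A`, as it is for the
vertices `x ∈ A` of the bipartite 3-graph with parts `A` and `V \ A`. -/
def LinkAvoids (F : Finset (Finset α)) (V A : Finset α) (κ : ℝ) (x : α) : Prop :=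
  (linkDefect F V A x : ℝ) ≤ κ * #V ^ 2

/-- The link of `x` is `κ`-close to that of a vertex of the bipartite 3-graph with parts `A` and
`V \ A`. -/
def LinkSplits (F : Finset (Finset α)) (V A : Finset α) (κ : ℝ) (x : α) : Prop :=
  LinkAvoids F V A κ x ∨ LinkAvoids F V (V \ A) κ x

theorem LinkSplits.compl {x : α} (h : LinkSplits F V A κ x) (hA : A ⊆ V) :
    LinkSplits F V (V \ A) κ x := by
  rw [LinkSplits, Finset.sdiff_sdiff_eq_self hA]
  exact h.symm

theorem weightSum_eq_sum_linkDeg (V : Finset α) :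
    weightSum F s V = ∑ i, linkDeg F V (s i) := by
  simp only [linkDeg, weightSum, weightDeg, weight, colours, card_filter]
  rw [← sum_product', sum_comm]

theorem weightSum_erase (hF : (F : Set (Finset α)).Sized 3) {x : α} (hx : x ∈ V) :
    weightSum F s V = weightSum F s (V.erase x) + 2 * weightDeg F s V x := by
  have hself : weightDeg F s {x} x = 0 := by rw [weightDeg, sum_singleton, weight_self hF]
  have hdeg : weightDeg F s V x = weightDeg F s (V.erase x) x + weightDeg F s {x} x := by
    rw [← weightDeg_union (by simp), union_comm, ← insert_eq, insert_erase hx]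
  conv_lhs => rw [← insert_erase hx, insert_eq, union_comm, weightSum_union (by simp)]
  have hsum : weightSum F s {x} = weightDeg F s {x} x := sum_singleton ..
  rw [sum_weightDeg_comm, sum_singleton, hdeg, hsum, hself, add_zero, add_zero]

theorem FanoFree.exists_nearExtremal (hF : FanoFree F) (hs : IsK4 F s) (hδ₀ : 0 < δ)
    (hδ : δ ≤ 1 / 10000) (hV : 4 ≤ δ * #V) (hsum : (3 - δ ^ 2) * #V ^ 2 ≤ weightSum F s V) :
    ∃ U ⊆ V, U.Nonempty ∧ (1 - δ) * #V ≤ #U ∧ NearExtremal F s U (2 * δ) := by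
  obtain ⟨U, hU, hmax⟩ := exists_max_image V.powerset
    (fun U => (weightSum F s U : ℝ) - (3 - δ) * #U ^ 2) ⟨V, mem_powerset_self V⟩
  rw [mem_powerset] at hU
  have hUV : (1 - δ) * #V ≤ #U := by
    have hmaxV := hmax V (mem_powerset_self V)
    have hsumU : (weightSum F s U : ℝ) ≤ 3 * #U ^ 2 := mod_cast hF.weightSum_le hs U
    have hsq : (1 - δ) * (#V : ℝ) ^ 2 ≤ #U ^ 2 := by
      refine le_of_mul_le_mul_left (?_ : δ * _ ≤ δ * _) hδ₀
      nlinarith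
    refine le_of_sq_le_sq ?_ (Nat.cast_nonneg _)
    nlinarith [mul_nonneg (mul_nonneg hδ₀.le (by linarith : 0 ≤ 1 - δ)) (sq_nonneg (#V : ℝ))]
  have hU₀ : (0 : ℝ) < #U := by nlinarith
  refine ⟨U, hU, card_pos.1 (mod_cast hU₀), hUV, hF, hs, by linarith, fun x hx => ?_⟩
  have hmax_erase := hmax (U.erase x) (mem_powerset.2 ((erase_subset _ _).trans hU))
  have hsum_erase : (weightSum F s U : ℝ) = weightSum F s (U.erase x) + 2 * weightDeg F s U x :=
    mod_cast weightSum_erase hF.sized hx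
  have hcard : (#(U.erase x) : ℝ) = #U - 1 := by rw [← card_erase_add_one hx]; simp
  simp only [hcard] at hmax_erase
  have : 3 ≤ δ * #U := by nlinarith
  nlinarith

end Link

section Counting

variable {α : Type*} {A V W : Finset α}

theorem exists_mem_of_card_filter_not_le {p : α → Prop} [DecidablePred p] {a : ℝ}
    (h : (#{q ∈ A | ¬p q} : ℝ) ≤ a) (ha : a < #A) : ∃ q ∈ A, p q := by
  by_contra! hp
  rw [filter_true_of_mem hp] at h
  linarith

theorem card_sub_le_card_filter_and {p q : α → Prop} [DecidablePred p] [DecidablePred q] {a b : ℝ}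
    (hp : (#{x ∈ A | ¬p x} : ℝ) ≤ a) (hq : (#{x ∈ A | ¬q x} : ℝ) ≤ b) :
    #A - (a + b) ≤ (#{x ∈ A | p x ∧ q x} : ℝ) := by
  have hcover : #A ≤ #{x ∈ A | p x ∧ q x} + #{x ∈ A | ¬p x} + #{x ∈ A | ¬q x} := by
    simp only [card_filter, ← sum_add_distrib]
    rw [card_eq_sum_ones]
    refine sum_le_sum fun x _ => ?_
    by_cases p x <;> by_cases q x <;> simp [*]
  replace hcover := (Nat.cast_le (α := ℝ)).2 hcover
  push_cast at hcover
  linarith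

theorem card_filter_product_not_le [DecidableEq α] {R : α → α → Prop} [DecidableRel R] {β : ℝ}
    (hβ : ∀ y ∈ W, (#{z ∈ W | ¬R y z} : ℝ) ≤ β) :
    (#{p ∈ V ×ˢ V | ¬R p.1 p.2} : ℝ) ≤ 2 * #(V \ W) * #V + β * #W := by
  have hW : (#{p ∈ W ×ˢ W | ¬R p.1 p.2} : ℝ) ≤ β * #W := by
    rw [card_filter, sum_product]
    simp only [← card_filter]
    push_cast
    exact (sum_le_card_nsmul _ _ _ hβ).trans_eq (by rw [nsmul_eq_mul, mul_comm])
  have hsub : ({p ∈ V ×ˢ V | ¬R p.1 p.2} : Finset (α × α)) ⊆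
      (V \ W) ×ˢ V ∪ V ×ˢ (V \ W) ∪ {p ∈ W ×ˢ W | ¬R p.1 p.2} := by
    intro p
    simp only [mem_filter, mem_product, mem_union, Finset.mem_sdiff]
    tauto
  have hcard : #{p ∈ V ×ˢ V | ¬R p.1 p.2} ≤
      #(V \ W) * #V + #V * #(V \ W) + #{p ∈ W ×ˢ W | ¬R p.1 p.2} := by
    rw [← card_product, ← card_product]
    exact (card_le_card hsub).trans
      ((card_union_le _ _).trans (Nat.add_le_add_right (card_union_le _ _) _))
  replace hcard := (Nat.cast_le (α := ℝ)).2 hcard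
  push_cast at hcard
  linarith

end Counting

section ColourSplit

variable {α : Type*} [DecidableEq α] {F : Finset (Finset α)} {s : Fin 4 → α} {V A B X : Finset α}
  {P : Finset (Fin 4)} {β δ κ : ℝ}

/-- All but at most `β` of the pairs at each vertex have colour set `P` inside `A`, colour set `Pᶜ`
inside `B`, and all colours between `A` and `B`. -/
structure ColourSplit (F : Finset (Finset α)) (s : Fin 4 → α) (A B : Finset α)
    (P : Finset (Fin 4)) (β : ℝ) : Prop where
  inner_left : ∀ y ∈ A, (#{z ∈ A | colours F s y z ≠ P} : ℝ) ≤ β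
  cross_left : ∀ y ∈ A, (#{z ∈ B | colours F s y z ≠ univ} : ℝ) ≤ β
  inner_right : ∀ y ∈ B, (#{z ∈ B | colours F s y z ≠ Pᶜ} : ℝ) ≤ β
  cross_right : ∀ y ∈ B, (#{z ∈ A | colours F s y z ≠ univ} : ℝ) ≤ β

theorem ColourSplit.symm (h : ColourSplit F s A B P β) : ColourSplit F s B A Pᶜ β :=
  ⟨h.inner_right, h.cross_right, by simpa using h.inner_left, h.cross_left⟩

theorem ColourSplit.linkDefect_le (h : ColourSplit F s A B P β) {i : Fin 4} (hi : i ∉ P)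
    (hAX : A ⊆ X) (hBX : Disjoint B X) :
    (linkDefect F V X (s i) : ℝ) ≤ 2 * #(V \ (A ∪ B)) * #V + 2 * β * #(A ∪ B) := by
  refine card_filter_product_not_le (R := fun y z => Edge F (s i) y z ↔ ¬(y ∈ X ∧ z ∈ X))
    fun y hy => ?_
  have card_le {CA CB : Finset (Fin 4)} (hA : (#{z ∈ A | colours F s y z ≠ CA} : ℝ) ≤ β)
      (hB : (#{z ∈ B | colours F s y z ≠ CB} : ℝ) ≤ β) (hCA : i ∈ CA ↔ y ∉ X) (hCB : i ∈ CB) :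
      (#{z ∈ A ∪ B | ¬(Edge F (s i) y z ↔ ¬(y ∈ X ∧ z ∈ X))} : ℝ) ≤ 2 * β := by
    have hsub : ({z ∈ A ∪ B | ¬(Edge F (s i) y z ↔ ¬(y ∈ X ∧ z ∈ X))} : Finset α) ⊆
        {z ∈ A | colours F s y z ≠ CA} ∪ {z ∈ B | colours F s y z ≠ CB} := by
      intro z
      simp only [mem_filter, mem_union, ← mem_colours]
      rintro ⟨hz | hz, hne⟩
      · exact .inl ⟨hz, by rintro rfl; have := hAX hz; tauto⟩
      · exact .inr ⟨hz, by rintro rfl; have := disjoint_left.1 hBX hz; tauto⟩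
    have hcard := (Nat.cast_le (α := ℝ)).2 <| (card_le_card hsub).trans (card_union_le _ _)
    push_cast at hcard
    linarith
  obtain hy | hy := mem_union.1 hy
  · exact card_le (h.inner_left y hy) (h.cross_left y hy) (by simp [hi, hAX hy]) (mem_univ i)
  · exact card_le (h.cross_right y hy) (h.inner_right y hy) (by simp [disjoint_left.1 hBX hy])
      (mem_compl.2 hi)

theorem FanoFree.colours_eq_compl (hF : FanoFree F) (hs : IsK4 F s) {v v' q q' : α}
    (hvv' : weight F s v v' = 2) (hvq : weight F s v q = 4 ∧ weight F s v' q = 4)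
    (hvq' : weight F s v q' = 4 ∧ weight F s v' q' = 4) (hqq' : weight F s q q' = 2) :
    colours F s q q' = (colours F s v v')ᶜ := by
  have hdisj : Disjoint (colours F s q q') (colours F s v v') := by
    apply hF.disjoint_colours hs <;> rw [weight_comm]
    exacts [hvq.1, hvq'.2, hvq.2, hvq'.1]
  refine eq_of_subset_of_card_le (subset_compl_iff_disjoint_right.2 hdisj) ?_
  rw [card_compl, ← weight, ← weight, hvv', hqq', Fintype.card_fin]

theorem WeightSplit.exists_colourSplit (h : WeightSplit F s A B β) (hF : FanoFree F)
    (hs : IsK4 F s) (hβ : 0 ≤ β) (hA : 3 * β < #A) (hB : β < #B) :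
    ∃ A' ⊆ A, ∃ B' ⊆ B, ∃ P, #A - 2 * β ≤ #A' ∧ #B - 2 * β ≤ #B' ∧ #P = 2 ∧
      ColourSplit F s A' B' P β := by
  have bound_mono {C D : Finset α} {p q : α → Prop} [DecidablePred p] [DecidablePred q]
      (hD : (#{z ∈ D | ¬q z} : ℝ) ≤ β) (hCD : C ⊆ D) (hpq : ∀ z ∈ C, q z → p z) :
      (#{z ∈ C | ¬p z} : ℝ) ≤ β :=
    (Nat.cast_le.2 <| card_le_card fun z hz => by
      rw [mem_filter] at hz ⊢
      exact ⟨hCD hz.1, fun hq => hz.2 (hpq z hz.1 hq)⟩).trans hD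
  have univ_of_weight {y z : α} (hyz : weight F s y z = 4) : colours F s y z = univ :=
    colours_eq_univ hyz
  obtain ⟨v, hv⟩ : B.Nonempty := card_pos.1 (mod_cast hβ.trans_lt hB)
  obtain ⟨v', hv', hvv'⟩ := exists_mem_of_card_filter_not_le (h.inner_right v hv) hB
  have hA' := card_sub_le_card_filter_and (h.cross_right v hv) (h.cross_right v' hv')
  set A' : Finset α := {q ∈ A | weight F s v q = 4 ∧ weight F s v' q = 4}
  have hA'A : A' ⊆ A := filter_subset _ _
  obtain ⟨a, ha⟩ : A'.Nonempty := card_pos.1 <| by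
    rw [← Nat.cast_pos (α := ℝ)]
    linarith
  obtain ⟨a', ha', haa'⟩ := exists_mem_of_card_filter_not_le (A := A') (a := β)
    (bound_mono (h.inner_left a (hA'A ha)) hA'A fun _ _ => id) (by linarith)
  have hB' := card_sub_le_card_filter_and (h.cross_left a (hA'A ha)) (h.cross_left a' (hA'A ha'))
  set B' : Finset α := {q ∈ B | weight F s a q = 4 ∧ weight F s a' q = 4}
  have hB'B : B' ⊆ B := filter_subset _ _
  have colours_left {y z : α} (hy : y ∈ A') (hz : z ∈ A') (hyz : weight F s y z = 2) :
      colours F s y z = (colours F s v v')ᶜ :=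
    hF.colours_eq_compl hs hvv' (mem_filter.1 hy).2 (mem_filter.1 hz).2 hyz
  refine ⟨A', hA'A, B', hB'B, colours F s a a', by linarith, by linarith, haa', ?_, ?_, ?_, ?_⟩
  · exact fun y hy => bound_mono (h.inner_left y (hA'A hy)) hA'A fun z hz hyz =>
      (colours_left hy hz hyz).trans (colours_left ha ha' haa').symm
  · exact fun y hy => bound_mono (h.cross_left y (hA'A hy)) hB'B fun z _ => univ_of_weight
  · exact fun y hy => bound_mono (h.inner_right y (hB'B hy)) hB'B fun z hz hyz =>
      hF.colours_eq_compl hs haa' (mem_filter.1 hy).2 (mem_filter.1 hz).2 hyz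
  · exact fun y hy => bound_mono (h.cross_right y (hB'B hy)) hA'A fun z _ => univ_of_weight

theorem ColourSplit.linkSplits (h : ColourSplit F s A B P β) (hB : B ⊆ V)
    (hAB : Disjoint A B) (hP : P.Nonempty) (hPc : Pᶜ.Nonempty)
    (hκ : 2 * #(V \ (A ∪ B)) * #V + 2 * β * #(A ∪ B) ≤ κ * #V ^ 2) :
    (∀ i, LinkSplits F V A κ (s i)) ∧ (∃ i, LinkAvoids F V A κ (s i)) ∧
      ∃ i, LinkAvoids F V (V \ A) κ (s i) := by
  have avoids_left (i) (hi : i ∉ P) : LinkAvoids F V A κ (s i) :=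
    (h.linkDefect_le hi subset_rfl hAB.symm).trans hκ
  have avoids_right (i) (hi : i ∈ P) : LinkAvoids F V (V \ A) κ (s i) :=
    (h.symm.linkDefect_le (by simpa using hi) (subset_sdiff.2 ⟨hB, hAB.symm⟩)
      disjoint_sdiff).trans (by rwa [union_comm])
  refine ⟨fun i => ?_, hPc.imp fun i hi => avoids_left i (mem_compl.1 hi), hP.imp avoids_right⟩
  by_cases hi : i ∈ P
  exacts [.inr (avoids_right i hi), .inl (avoids_left i hi)]

theorem FanoFree.exists_linkSplits (hF : FanoFree F) (hs : IsK4 F s) (hδ₀ : 0 < δ)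
    (hδ : δ ≤ 1 / 10000) (hV : 4 ≤ δ * #V) (hsum : (3 - δ ^ 2) * #V ^ 2 ≤ weightSum F s V) :
    ∃ A ⊆ V, (1 / 2 - 65 * δ) * #V ≤ #A ∧ (1 / 2 - 65 * δ) * #V ≤ #(V \ A) ∧
      (∀ i, LinkSplits F V A (400 * δ) (s i)) ∧ (∃ i, LinkAvoids F V A (400 * δ) (s i)) ∧
      ∃ i, LinkAvoids F V (V \ A) (400 * δ) (s i) := by
  obtain ⟨U, hUV, hU, hcardU, hnear⟩ := hF.exists_nearExtremal hs hδ₀ hδ hV hsum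
  obtain ⟨A, hAU, B, hBU, hA, hB, hAB⟩ := hnear.exists_weightSplit hU
  have hUpos : (0 : ℝ) < #U := mod_cast hU.card_pos
  have hUle : (#U : ℝ) ≤ #V := mod_cast card_le_card hUV
  have hδU : δ * #U ≤ #U / 10000 := by nlinarith
  obtain ⟨A', hA'A, B', hB'B, P, hA', hB', hP, hsplit⟩ :=
    hAB.exists_colourSplit hF hs (by positivity) (by linarith) (by linarith)
  have hA'V : A' ⊆ V := hA'A.trans (hAU.trans hUV)
  have hB'V : B' ⊆ V := hB'B.trans (hBU.trans hUV)
  have hdisj : Disjoint A' B' := hAB.disjoint.mono hA'A hB'B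
  have hδV : δ * #U ≤ δ * #V := by gcongr
  have hrest : (#(V \ (A' ∪ B')) : ℝ) ≤ 130 * δ * #V := by
    have := card_sdiff_add_card_eq_card (union_subset hA'V hB'V)
    rw [card_union_of_disjoint hdisj, ← Nat.cast_inj (R := ℝ)] at this
    push_cast at this
    linarith
  have hunion : (#(A' ∪ B') : ℝ) ≤ #V := mod_cast card_le_card (union_subset hA'V hB'V)
  have hB'le : (#B' : ℝ) ≤ #(V \ A') :=
    mod_cast card_le_card (subset_sdiff.2 ⟨hB'V, hdisj.symm⟩)
  refine ⟨A', hA'V, by linarith, by linarith, hsplit.linkSplits hB'V hdisj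
    (card_pos.1 (by simp [hP])) (card_pos.1 (by simp [card_compl, hP])) ?_⟩
  calc
    _ ≤ 2 * (130 * δ * #V) * #V + 2 * (13 * (2 * δ) * #V) * (#V : ℝ) := by gcongr
    _ ≤ 400 * δ * #V ^ 2 := by nlinarith [sq_nonneg (#V : ℝ)]

end ColourSplit

/-! ### Degree stability -/

section Codegree

variable {α : Type*} [DecidableEq α] {F : Finset (Finset α)} {V J : Finset α} {x y z : α} {ε : ℝ}

/-- The number of edges containing `x`, `y` and a vertex of `V`. -/
def codeg (F : Finset (Finset α)) (V : Finset α) (x y : α) : ℕ := #{z ∈ V | Edge F x y z}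

theorem linkDeg_eq_sum_codeg (V : Finset α) (x : α) : linkDeg F V x = ∑ y ∈ V, codeg F V x y := by
  simp only [linkDeg, codeg, card_filter, sum_product]

theorem codeg_add_codeg_add_codeg_le
    (h : ∀ q ∈ V, q ∉ J → ¬(Edge F x y q ∧ Edge F x z q ∧ Edge F y z q)) :
    codeg F V x y + codeg F V x z + codeg F V y z ≤ 2 * #V + #J := by
  have hJ : #{q ∈ V | q ∈ J} ≤ #J := card_le_card fun q hq => (mem_filter.1 hq).2
  have hsum : codeg F V x y + codeg F V x z + codeg F V y z ≤
      #V * 2 + #{q ∈ V | q ∈ J} := by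
    rw [← smul_eq_mul, ← sum_const]
    simp only [codeg, card_filter, ← sum_add_distrib]
    refine sum_le_sum fun q hq => ?_
    have := h q hq
    split_ifs <;> simp_all
  omega

theorem sum_codeg_sq_le
    (h : ∀ y ∈ V, ∀ z ∈ V, ∀ q ∈ V, q ∉ J → Edge F x y z →
      ¬(Edge F x y q ∧ Edge F x z q ∧ Edge F y z q)) :
    2 * ∑ y ∈ V, codeg F V x y ^ 2 + ∑ y ∈ V, linkDeg F V y ≤
      #V ^ 2 * (#V + #J) + #V * linkDeg F V x := by
  have pair_le : ∀ y ∈ V, ∀ z ∈ V,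
      (if Edge F x y z then codeg F V x y else 0) + (if Edge F x y z then codeg F V x z else 0) +
        codeg F V y z ≤ #V + #J + #V * if Edge F x y z then 1 else 0 := by
    intro y hy z hz
    split_ifs with hxyz
    · have := codeg_add_codeg_add_codeg_le fun q hq hqJ => h y hy z hz q hq hqJ hxyz
      omega
    · have : codeg F V y z ≤ #V := card_filter_le _ _
      omega
  have sum_left : ∑ y ∈ V, ∑ z ∈ V, (if Edge F x y z then codeg F V x y else 0) =
      ∑ y ∈ V, codeg F V x y ^ 2 := by
    refine sum_congr rfl fun y _ => ?_
    rw [← sum_filter, sum_const, smul_eq_mul, sq]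
    rfl
  have sum_right : ∑ y ∈ V, ∑ z ∈ V, (if Edge F x y z then codeg F V x z else 0) =
      ∑ y ∈ V, codeg F V x y ^ 2 := by
    rw [sum_comm, ← sum_left]
    simp only [edge_right_comm]
  have hsum := sum_le_sum fun y hy => sum_le_sum (pair_le y hy)
  simp only [sum_add_distrib, sum_left, sum_right, ← mul_sum, sum_const, smul_eq_mul,
    ← card_filter, ← linkDeg_eq_sum_codeg] at hsum
  rw [linkDeg_eq_sum_codeg V x]
  simp only [codeg] at hsum ⊢
  linarith

theorem exists_edge_of_le_linkDeg (hε : ε ≤ 1 / 1000) (hV : V.Nonempty)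
    (hJ : (#J : ℝ) ≤ #V / 100) (hx : (3 / 4 - ε) * #V ^ 2 ≤ (linkDeg F V x : ℝ))
    (hdeg : ∀ y ∈ V, (3 / 4 - ε) * #V ^ 2 ≤ (linkDeg F V y : ℝ)) :
    ∃ y ∈ V, ∃ z ∈ V, ∃ q ∈ V, q ∉ J ∧ Edge F x y z ∧ Edge F x y q ∧ Edge F x z q ∧
      Edge F y z q := by
  by_contra! hnone
  have hsum := sum_codeg_sq_le fun y hy z hz q hq hqJ hxyz hK4 =>
    hnone y hy z hz q hq hqJ hxyz hK4.1 hK4.2.1 hK4.2.2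
  replace hsum := (Nat.cast_le (α := ℝ)).2 hsum
  have hsq : 3 / 2 * #V * linkDeg F V x - #V * (9 / 16 * #V ^ 2) ≤
      ∑ y ∈ V, (codeg F V x y : ℝ) ^ 2 := by
    rw [linkDeg_eq_sum_codeg, Nat.cast_sum, mul_sum, ← nsmul_eq_mul, ← sum_const,
      ← sum_sub_distrib]
    exact sum_le_sum fun y _ => by nlinarith [sq_nonneg ((codeg F V x y : ℝ) - 3 / 4 * #V)]
  have hlink : #V * ((3 / 4 - ε) * #V ^ 2) ≤ ∑ y ∈ V, (linkDeg F V y : ℝ) := by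
    rw [← nsmul_eq_mul]
    exact card_nsmul_le_sum _ _ _ hdeg
  have hJ' : (#V : ℝ) ^ 2 * #J ≤ #V ^ 2 * (#V / 100) := by gcongr
  have hx' : #V * ((3 / 4 - ε) * #V ^ 2) ≤ #V * (linkDeg F V x : ℝ) := by gcongr
  have hε' : ε * #V ^ 3 ≤ 1 / 1000 * #V ^ 3 := by gcongr
  have hn3 : (0 : ℝ) < #V ^ 3 := by positivity
  push_cast at hsum
  nlinarith

end Codegree

section Clique

variable {α : Type*} {U : Finset α}

theorem card_filter_lt_mul_le (X : Finset α) (f : α → ℕ) (c : ℝ) :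
    #{x ∈ X | c < f x} * c ≤ ((∑ x ∈ X, f x : ℕ) : ℝ) := by
  rw [← nsmul_eq_mul, Nat.cast_sum]
  exact (card_nsmul_le_sum _ _ _ fun x hx => (mem_filter.1 hx).2.le).trans <|
    sum_le_sum_of_subset_of_nonneg (filter_subset _ _) fun _ _ _ => Nat.cast_nonneg _

theorem exists_pairwise_of_sum_card_filter_not_lt {R : α → α → Prop} [DecidableRel R]
    (hR : Std.Symm R) {k : ℕ} (h : 4 * k * ∑ x ∈ U, #{y ∈ U | ¬R x y} < #U ^ 2) :
    ∃ v : Fin (k + 1) → α, (∀ i, v i ∈ U) ∧ Pairwise fun i j => R (v i) (v j) := by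
  let f (x : α) : ℕ := 2 * k * #{y ∈ U | ¬R x y}
  let W : Finset α := {x ∈ U | ¬(#U : ℝ) < f x}
  have hWU : W ⊆ U := filter_subset _ _
  have hW : #U < 2 * #W := by
    have hU : (0 : ℝ) < #U := by
      rw [Nat.cast_pos]
      by_contra! h₀
      simp [Nat.le_zero.1 h₀] at h
    have hmarkov := card_filter_lt_mul_le U f #U
    have hsplit : #{x ∈ U | (#U : ℝ) < f x} + #W = #U :=
      card_filter_add_card_filter_not fun x => (#U : ℝ) < f x
    have hsum : 2 * ((∑ x ∈ U, f x : ℕ) : ℝ) < #U ^ 2 := by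
      refine lt_of_eq_of_lt ?_ ((Nat.cast_lt (α := ℝ)).2 h |>.trans_eq (by push_cast; rfl))
      rw [← mul_sum]
      push_cast
      ring
    rify at hsplit ⊢
    nlinarith [hU]
  have few_not : ∀ x ∈ W, k * #{y ∈ W | ¬R x y} < #W := by
    intro x hx
    have hfx : f x ≤ #U := Nat.cast_le.1 (not_lt.1 (mem_filter.1 hx).2)
    have : k * #{y ∈ W | ¬R x y} ≤ k * #{y ∈ U | ¬R x y} :=
      Nat.mul_le_mul_left _ (card_le_card (filter_subset_filter _ hWU))
    simp only [f, mul_assoc] at hfx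
    omega
  obtain ⟨v, hv, hpair⟩ := exists_pairwise_of_card_filter_not_lt (card_pos.1 (by omega)) hR few_not
  exact ⟨v, fun i => hWU (hv i), hpair⟩

end Clique

section LinkTransfer

variable {α : Type*} [DecidableEq α] {F : Finset (Finset α)} {V A A' : Finset α} {x y z : α}
  {κ κ' ε : ℝ}

/-- Neither part of the bipartition of `V` into `A` and `V \ A` is much smaller than the other. -/
structure IsBalanced (V A : Finset α) : Prop where
  subset : A ⊆ V
  le_card : 49 / 100 * (#V : ℝ) ≤ #A
  le_card_compl : 49 / 100 * (#V : ℝ) ≤ #(V \ A)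

theorem IsBalanced.compl (h : IsBalanced V A) : IsBalanced V (V \ A) :=
  ⟨sdiff_subset, h.le_card_compl, by rw [Finset.sdiff_sdiff_eq_self h.subset]; exact h.le_card⟩

theorem IsBalanced.card_le (h : IsBalanced V A) : (#A : ℝ) ≤ 51 / 100 * #V := by
  have := (Nat.cast_inj (R := ℝ)).2 (card_sdiff_add_card_eq_card h.subset)
  push_cast at this
  linarith [h.le_card_compl]

theorem card_sdiff_mul_card_le (hA : A ⊆ V) :
    #(A \ A') * #A ≤ linkDefect F V A x + linkDefect F V A' x := by
  rw [← card_product]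
  refine (card_le_card fun p => ?_).trans (card_union_le _ _)
  simp only [mem_product, mem_union, mem_filter, Finset.mem_sdiff]
  have := @hA p.1
  have := @hA p.2
  tauto

theorem linkDefect_le_add (V A A' : Finset α) (x : α) :
    linkDefect F V A' x ≤ linkDefect F V A x + 2 * #V * (#(A \ A') + #(A' \ A)) := by
  have hsub : ({p ∈ V ×ˢ V | ¬(Edge F x p.1 p.2 ↔ ¬(p.1 ∈ A' ∧ p.2 ∈ A'))} : Finset (α × α)) ⊆
      {p ∈ V ×ˢ V | ¬(Edge F x p.1 p.2 ↔ ¬(p.1 ∈ A ∧ p.2 ∈ A))} ∪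
        ((A \ A' ∪ A' \ A) ×ˢ V ∪ V ×ˢ (A \ A' ∪ A' \ A)) := by
    intro p
    simp only [mem_product, mem_union, mem_filter, Finset.mem_sdiff]
    tauto
  have hcard := (card_le_card hsub).trans <| (card_union_le _ _).trans <|
    Nat.add_le_add_left (card_union_le _ _) _
  rw [card_product, card_product] at hcard
  have := Nat.mul_le_mul_left (2 * #V) (card_union_le (A \ A') (A' \ A))
  unfold linkDefect
  linarith

theorem LinkAvoids.card_sdiff_le (hV : V.Nonempty) (hA : IsBalanced V A)
    (h : LinkAvoids F V A κ x) (h' : LinkAvoids F V A' κ' x) :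
    (#(A \ A') : ℝ) ≤ 3 * (κ + κ') * #V := by
  have hn : (0 : ℝ) < #V := mod_cast hV.card_pos
  have hcard := (Nat.cast_le (α := ℝ)).2
    (card_sdiff_mul_card_le (F := F) (A' := A') (x := x) hA.subset)
  push_cast at hcard
  have hthird : (#V : ℝ) / 3 ≤ #A := by linarith [hA.le_card]
  have := mul_le_mul_of_nonneg_left hthird (Nat.cast_nonneg (#(A \ A')))
  refine le_of_mul_le_mul_right ?_ hn
  rw [LinkAvoids] at h h'
  linarith

theorem LinkAvoids.linkSplits_of_linkSplits (hV : V.Nonempty) (hA : IsBalanced V A)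
    (hA' : IsBalanced V A') (h : LinkAvoids F V A κ x) (h' : LinkAvoids F V A' κ' x)
    (hy : LinkSplits F V A' κ' y) : LinkSplits F V A (κ' + 12 * (κ + κ')) y := by
  have hsdiff := mul_le_mul_of_nonneg_left
    (add_le_add (h'.card_sdiff_le hV hA' h) (h.card_sdiff_le hV hA h'))
    (Nat.cast_nonneg (α := ℝ) #V)
  refine hy.imp (fun hy => ?_) fun hy => ?_
  · have := (Nat.cast_le (α := ℝ)).2 (linkDefect_le_add (F := F) V A' A y)
    push_cast at this
    rw [LinkAvoids] at hy ⊢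
    linarith
  · have := (Nat.cast_le (α := ℝ)).2 (linkDefect_le_add (F := F) V (V \ A') (V \ A) y)
    rw [sdiff_sdiff_sdiff_cancel_left hA.subset, sdiff_sdiff_sdiff_cancel_left hA'.subset] at this
    push_cast at this
    rw [LinkAvoids] at hy ⊢
    linarith

theorem LinkSplits.trans (hV : V.Nonempty) (hA : IsBalanced V A) (hA' : IsBalanced V A')
    (h : LinkSplits F V A κ x) (h' : LinkSplits F V A' κ' x) (hy : LinkSplits F V A' κ' y) :
    LinkSplits F V A (κ' + 12 * (κ + κ')) y := by
  have of_left {X : Finset α} (hX : IsBalanced V X) (hXx : LinkAvoids F V X κ x) :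
      LinkSplits F V X (κ' + 12 * (κ + κ')) y := by
    obtain h' | h' := h'
    · exact hXx.linkSplits_of_linkSplits hV hX hA' h' hy
    · exact hXx.linkSplits_of_linkSplits hV hX hA'.compl h' (hy.compl hA'.subset)
  obtain h | h := h
  · exact of_left hA h
  · simpa only [Finset.sdiff_sdiff_eq_self hA.subset] using
      (of_left hA.compl h).compl hA.compl.subset

theorem sum_card_not_edge_le_linkDefect (F : Finset (Finset α)) (V A : Finset α) (x : α) :
    ∑ y ∈ V \ A, #{z ∈ V | ¬Edge F x y z} ≤ linkDefect F V A x := by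
  simp only [card_filter]
  rw [← sum_product' (f := fun y z => if ¬Edge F x y z then 1 else 0), ← card_filter]
  refine card_le_card fun p => ?_
  simp only [mem_product, mem_filter, Finset.mem_sdiff]
  tauto

theorem LinkAvoids.card_filter_not_edge_le (hV : V.Nonempty) (h : LinkAvoids F V A κ x) :
    (#{y ∈ V \ A | (#V : ℝ) / 8 < #{z ∈ V | ¬Edge F x y z}} : ℝ) ≤ 8 * κ * #V := by
  have hn : (0 : ℝ) < #V := mod_cast hV.card_pos
  have hmarkov := card_filter_lt_mul_le (V \ A) (fun y => #{z ∈ V | ¬Edge F x y z}) (#V / 8)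
  have := (Nat.cast_le (α := ℝ)).2 (sum_card_not_edge_le_linkDefect F V A x)
  rw [LinkAvoids] at h
  exact le_of_mul_le_mul_right (by linarith) hn

theorem LinkAvoids.not_edge (hF : FanoFree F) (hκ : κ ≤ 1 / 500) (hV : V.Nonempty)
    (hA : IsBalanced V A) (hx : LinkAvoids F V A κ x) (hy : LinkAvoids F V A κ y)
    (hz : LinkAvoids F V A κ z) : ¬Edge F x y z := by
  intro hxyz
  have hn : (0 : ℝ) < #V := mod_cast hV.card_pos
  let R (p q : α) : Prop := Edge F x p q ∧ Edge F y p q ∧ Edge F z p q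
  have hR : Std.Symm R := ⟨fun p q => by simp only [R, edge_right_comm, imp_self]⟩
  have hsum : ∑ p ∈ V \ A, #{q ∈ V \ A | ¬R p q} ≤
      linkDefect F V A x + linkDefect F V A y + linkDefect F V A z := by
    refine le_trans ?_ <| add_le_add (add_le_add (sum_card_not_edge_le_linkDefect F V A x)
      (sum_card_not_edge_le_linkDefect F V A y)) (sum_card_not_edge_le_linkDefect F V A z)
    rw [← sum_add_distrib, ← sum_add_distrib]
    refine sum_le_sum fun p _ => (card_le_card fun q => ?_).trans <| (card_union_le _ _).trans <|
      Nat.add_le_add_right (card_union_le _ _) _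
    simp only [R, mem_filter, mem_union, Finset.mem_sdiff]
    tauto
  have hfew : 4 * 3 * ∑ p ∈ V \ A, #{q ∈ V \ A | ¬R p q} < #(V \ A) ^ 2 := by
    rw [LinkAvoids] at hx hy hz
    have hcard : (49 / 100 * (#V : ℝ)) ^ 2 ≤ #(V \ A) ^ 2 := by
      gcongr
      exact hA.le_card_compl
    have hκ' : κ * #V ^ 2 ≤ 1 / 500 * #V ^ 2 := by gcongr
    have hn2 : (0 : ℝ) < #V ^ 2 := by positivity
    replace hsum := (Nat.cast_le (α := ℝ)).2 hsum
    rw [← Nat.cast_lt (α := ℝ)]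
    push_cast at hsum ⊢
    linarith
  obtain ⟨v, -, hv⟩ := exists_pairwise_of_sum_card_filter_not_lt hR hfew
  have hv' (i j : Fin 4) (hij : i ≠ j) : R (v i) (v j) := hv hij
  exact hF.not_isFano x y z (v 0) (v 1) (v 2) (v 3)
    ⟨hxyz, (hv' 0 1 (by decide)).1, (hv' 2 3 (by decide)).1, (hv' 0 2 (by decide)).2.1,
      (hv' 1 3 (by decide)).2.1, (hv' 0 3 (by decide)).2.2, (hv' 1 2 (by decide)).2.2⟩

theorem LinkAvoids.exists_edge (hκ : κ ≤ 1 / 1000) (hε : ε ≤ 1 / 1000) (hV : V.Nonempty)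
    (hA : IsBalanced V A) (hx : LinkAvoids F V A κ x)
    (hy : (3 / 4 - ε) * #V ^ 2 ≤ (linkDeg F V y : ℝ))
    (hxy : (#{z ∈ V | ¬Edge F x y z} : ℝ) ≤ #V / 8) :
    ∃ z ∈ V, ∃ q ∈ V, Edge F x y z ∧ Edge F x y q ∧ Edge F x z q ∧ Edge F y z q := by
  by_contra! hnone
  have hn : (0 : ℝ) < #V := mod_cast hV.card_pos
  set M : Finset α := {z ∈ V | ¬Edge F x y z}
  have hsub : ({p ∈ V ×ˢ V | Edge F y p.1 p.2} : Finset (α × α)) ⊆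
      M ×ˢ V ∪ V ×ˢ M ∪ {p ∈ V ×ˢ V | ¬(Edge F x p.1 p.2 ↔ ¬(p.1 ∈ A ∧ p.2 ∈ A))} ∪ A ×ˢ A := by
    intro p
    have := hnone p.1
    simp only [M, mem_union, mem_product, mem_filter]
    grind
  have hcard := (card_le_card hsub).trans <| (card_union_le _ _).trans <| Nat.add_le_add_right
    ((card_union_le _ _).trans <| Nat.add_le_add_right (card_union_le _ _) _) _
  simp only [card_product] at hcard
  change linkDeg F V y ≤ _ + linkDefect F V A x + _ at hcard
  replace hcard := (Nat.cast_le (α := ℝ)).2 hcard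
  push_cast at hcard
  rw [LinkAvoids] at hx
  have hMV : (#M : ℝ) * #V ≤ #V / 8 * #V := by gcongr
  have hAA : (#A : ℝ) * #A ≤ (51 / 100 * #V) * (51 / 100 * #V) := by
    gcongr <;> exact hA.card_le
  have hκ' : κ * #V ^ 2 ≤ 1 / 1000 * #V ^ 2 := by gcongr
  have hε' : ε * #V ^ 2 ≤ 1 / 1000 * #V ^ 2 := by gcongr
  have hn2 : (0 : ℝ) < #V ^ 2 := by positivity
  nlinarith

end LinkTransfer

section DegreeStability

variable {α : Type*} [DecidableEq α] {F : Finset (Finset α)} {V A J : Finset α} {s : Fin 4 → α}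
  {κ δ : ℝ} {x y z w a : α}

theorem isK4_of_edge (hxyz : Edge F x y z) (hxyw : Edge F x y w) (hxzw : Edge F x z w)
    (hyzw : Edge F y z w) : IsK4 F ![x, y, z, w] := by
  intro i j k hij hik hjk
  fin_cases i <;> fin_cases j <;> simp at hij <;> fin_cases k <;> simp at hik hjk <;>
    simp <;> grind [edge_left_comm, edge_right_comm]

/-- A large Fano-free 3-graph on `V` whose links all have almost `3 / 4 |V| ^ 2` ordered pairs, as
in the balanced complete bipartite 3-graph. -/
structure HasLargeLinks (F : Finset (Finset α)) (V : Finset α) (δ : ℝ) : Prop where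
  fanoFree : FanoFree F
  delta_pos : 0 < δ
  delta_le : δ ≤ 1 / 10 ^ 8
  le_card : 4 ≤ δ * #V
  le_linkDeg : ∀ x ∈ V, (3 / 4 - δ ^ 2 / 4) * #V ^ 2 ≤ (linkDeg F V x : ℝ)

namespace HasLargeLinks

theorem nonempty (h : HasLargeLinks F V δ) : V.Nonempty := by
  rw [nonempty_iff_ne_empty]
  rintro rfl
  have := h.le_card
  norm_num at this

theorem sq_delta_le (h : HasLargeLinks F V δ) : δ ^ 2 / 4 ≤ 1 / 1000 := by
  nlinarith [h.delta_pos, h.delta_le]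

theorem exists_isK4 (h : HasLargeLinks F V δ) (hJ : (#J : ℝ) ≤ #V / 100) (hx : x ∈ V) :
    ∃ y ∈ V, ∃ z ∈ V, ∃ q ∈ V, q ∉ J ∧ IsK4 F ![x, y, z, q] := by
  obtain ⟨y, hy, z, hz, q, hq, hqJ, hxyz, hxyq, hxzq, hyzq⟩ :=
    exists_edge_of_le_linkDeg h.sq_delta_le h.nonempty hJ (h.le_linkDeg x hx) h.le_linkDeg
  exact ⟨y, hy, z, hz, q, hq, hqJ, isK4_of_edge hxyz hxyq hxzq hyzq⟩

theorem exists_linkSplits (h : HasLargeLinks F V δ) (hs : IsK4 F s) (hsV : ∀ i, s i ∈ V) :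
    ∃ A, IsBalanced V A ∧ (∀ i, LinkSplits F V A (400 * δ) (s i)) ∧
      (∃ i, LinkAvoids F V A (400 * δ) (s i)) ∧ ∃ i, LinkAvoids F V (V \ A) (400 * δ) (s i) := by
  have hδ := h.delta_le
  have hδV : δ * #V ≤ 1 / 10000 * #V := by gcongr; linarith
  have hsum : (3 - δ ^ 2) * #V ^ 2 ≤ (weightSum F s V : ℝ) := by
    rw [weightSum_eq_sum_linkDeg, Fin.sum_univ_four]
    push_cast
    linarith [h.le_linkDeg _ (hsV 0), h.le_linkDeg _ (hsV 1), h.le_linkDeg _ (hsV 2),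
      h.le_linkDeg _ (hsV 3)]
  obtain ⟨A, hAV, hA, hA', hlinks⟩ :=
    h.fanoFree.exists_linkSplits hs h.delta_pos (by linarith) h.le_card hsum
  exact ⟨A, ⟨hAV, by linarith, by linarith⟩, hlinks⟩

theorem linkSplits_of_isK4 (h : HasLargeLinks F V δ) (hA : IsBalanced V A) (hs : IsK4 F s)
    (hsV : ∀ i, s i ∈ V) {i : Fin 4} (hi : LinkSplits F V A κ (s i)) (j : Fin 4) :
    LinkSplits F V A (400 * δ + 12 * (κ + 400 * δ)) (s j) := by
  obtain ⟨A', hA', hlinks, -⟩ := h.exists_linkSplits hs hsV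
  exact hi.trans h.nonempty hA hA' (hlinks i) (hlinks j)

theorem linkSplits_of_linkAvoids (h : HasLargeLinks F V δ) (hA : IsBalanced V A) (ha : a ∈ V)
    (haA : LinkAvoids F V A (400 * δ) a) (hx : x ∈ V)
    (hax : (#{z ∈ V | ¬Edge F a x z} : ℝ) ≤ #V / 8) : LinkSplits F V A (10000 * δ) x := by
  have hδ := h.delta_le
  obtain ⟨y, hy, z, hz, haxy, haxz, hayz, hxyz⟩ := haA.exists_edge (by linarith) h.sq_delta_le
    h.nonempty hA (h.le_linkDeg x hx) hax
  rw [show 10000 * δ = 400 * δ + 12 * (400 * δ + 400 * δ) by ring]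
  exact h.linkSplits_of_isK4 (s := ![a, x, y, z]) hA (isK4_of_edge haxy haxz hayz hxyz)
    (by simp [Fin.forall_fin_succ, *]) (i := 0) (.inl haA) 1

-- A first `K₄` determines the bipartition; it controls every vertex having large codegree with one
-- of two fixed vertices of that `K₄`, and each remaining vertex shares a `K₄` with such a vertex.
theorem exists_forall_linkSplits (h : HasLargeLinks F V δ) :
    ∃ A, IsBalanced V A ∧ ∀ x ∈ V, LinkSplits F V A (125200 * δ) x := by
  have hδ := h.delta_le
  have hn : (0 : ℝ) < #V := mod_cast h.nonempty.card_pos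
  obtain ⟨x, hx⟩ := h.nonempty
  have hempty : (#(∅ : Finset α) : ℝ) ≤ #V / 100 := by
    rw [card_empty, Nat.cast_zero]
    positivity
  obtain ⟨y, hy, z, hz, q, hq, -, hK4⟩ := h.exists_isK4 hempty hx
  have hmem : ∀ i, ![x, y, z, q] i ∈ V := by simp [Fin.forall_fin_succ, *]
  obtain ⟨A, hA, -, ⟨i, ha⟩, j, hb⟩ := h.exists_linkSplits hK4 hmem
  generalize ![x, y, z, q] i = a, hmem i = haV at ha
  generalize ![x, y, z, q] j = b, hmem j = hbV at hb
  let exceptional (X : Finset α) (u : α) : Finset α :=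
    {y ∈ V \ X | (#V : ℝ) / 8 < #{z ∈ V | ¬Edge F u y z}}
  let J := exceptional A a ∪ exceptional (V \ A) b
  have hJ : (#J : ℝ) ≤ #V / 100 := by
    have hcard := (Nat.cast_le (α := ℝ)).2 <|
      card_union_le (exceptional A a) (exceptional (V \ A) b)
    push_cast at hcard
    nlinarith [ha.card_filter_not_edge_le h.nonempty, hb.card_filter_not_edge_le h.nonempty]
  have of_notMem : ∀ x ∈ V, x ∉ J → LinkSplits F V A (10000 * δ) x := by
    intro x hx hxJ
    obtain ⟨hxa, hxb⟩ := not_or.1 (mt mem_union.2 hxJ)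
    by_cases hxA : x ∈ A
    · rw [← Finset.sdiff_sdiff_eq_self hA.subset]
      refine (h.linkSplits_of_linkAvoids hA.compl hbV hb hx ?_).compl sdiff_subset
      exact not_lt.1 fun hlt => hxb (mem_filter.2 ⟨by simp [hx, hxA], hlt⟩)
    · refine h.linkSplits_of_linkAvoids hA haV ha hx ?_
      exact not_lt.1 fun hlt => hxa (mem_filter.2 ⟨by simp [hx, hxA], hlt⟩)
  refine ⟨A, hA, fun x hx => ?_⟩
  obtain ⟨y, hy, z, hz, q, hq, hqJ, hK4⟩ := h.exists_isK4 hJ hx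
  rw [show 125200 * δ = 400 * δ + 12 * (10000 * δ + 400 * δ) by ring]
  exact h.linkSplits_of_isK4 hA hK4 (by simp [Fin.forall_fin_succ, *]) (i := 3)
    (of_notMem q hq hqJ) 0

theorem exists_bipartition (h : HasLargeLinks F V δ) :
    ∃ P ⊆ V, (∀ x ∈ P, ∀ y ∈ P, ∀ z ∈ P, ¬Edge F x y z) ∧
      ∀ x ∈ V \ P, ∀ y ∈ V \ P, ∀ z ∈ V \ P, ¬Edge F x y z := by
  classical
  obtain ⟨A, hA, hsplit⟩ := h.exists_forall_linkSplits
  have hδ : 125200 * δ ≤ 1 / 500 := by linarith [h.delta_le]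
  have avoids_compl : ∀ x ∈ V \ {x ∈ V | LinkAvoids F V A (125200 * δ) x},
      LinkAvoids F V (V \ A) (125200 * δ) x := by
    intro x hx
    rw [Finset.mem_sdiff, mem_filter] at hx
    exact (hsplit x hx.1).resolve_left fun hxA => hx.2 ⟨hx.1, hxA⟩
  exact ⟨_, filter_subset _ _, fun x hx y hy z hz => (mem_filter.1 hx).2.not_edge h.fanoFree hδ
    h.nonempty hA (mem_filter.1 hy).2 (mem_filter.1 hz).2, fun x hx y hy z hz =>
    (avoids_compl x hx).not_edge h.fanoFree hδ h.nonempty hA.compl (avoids_compl y hy)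
      (avoids_compl z hz)⟩

end HasLargeLinks

end DegreeStability

/-! ### The extremal Fano-free 3-graphs -/

section CrossCard

/-- The number of triples meeting both parts of a partition into parts of sizes `p` and `q`. -/
def crossCard (p q : ℕ) : ℕ := p.choose 2 * q + p * q.choose 2

/-- The number of edges of the balanced complete bipartite 3-graph `B₃(m)`. -/
def balancedCrossCard (m : ℕ) : ℕ := crossCard (m / 2) (m - m / 2)

theorem add_choose_three (p q : ℕ) :
    (p + q).choose 3 = p.choose 3 + q.choose 3 + crossCard p q := by
  rw [Nat.add_choose_eq, Nat.sum_antidiagonal_eq_sum_range_succ_mk]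
  simp only [sum_range_succ, range_zero, sum_empty, crossCard, Nat.choose_zero_right,
    Nat.choose_one_right, tsub_zero, Nat.reduceSub]
  ring

theorem cast_crossCard (p q : ℕ) : (crossCard p q : ℝ) = p * q * (p + q - 2) / 2 := by
  rw [crossCard, Nat.cast_add, Nat.cast_mul, Nat.cast_mul, Nat.cast_choose_two,
    Nat.cast_choose_two]
  ring

theorem mul_le_half_mul_half (p q : ℕ) : p * q ≤ (p + q) / 2 * (p + q - (p + q) / 2) := by
  obtain ⟨k, r, hr, hk⟩ : ∃ k r, r ≤ 1 ∧ p + q = 2 * k + r :=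
    ⟨(p + q) / 2, (p + q) % 2, by omega, by omega⟩
  rw [show (p + q) / 2 = k by omega, show p + q - k = k + r by omega]
  by_contra! hlt
  obtain h | h : p ≤ k ∨ k + r ≤ p := by omega
  · obtain ⟨a, rfl⟩ := Nat.exists_eq_add_of_le h
    obtain rfl : q = p + 2 * a + r := by omega
    nlinarith
  · obtain ⟨a, rfl⟩ := Nat.exists_eq_add_of_le h
    obtain rfl : k = q + a := by omega
    nlinarith

theorem eq_half_or_eq_half_of_mul_eq {p q : ℕ}
    (h : p * q = (p + q) / 2 * (p + q - (p + q) / 2)) : p = (p + q) / 2 ∨ q = (p + q) / 2 := by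
  obtain ⟨k, r, hr, hk⟩ : ∃ k r, r ≤ 1 ∧ p + q = 2 * k + r :=
    ⟨(p + q) / 2, (p + q) % 2, by omega, by omega⟩
  rw [show (p + q) / 2 = k by omega, show p + q - k = k + r by omega] at h
  rw [show (p + q) / 2 = k by omega]
  have hroot : ((p : ℤ) - k) * (q - k) = 0 := by
    zify at h hk
    linear_combination h - k * hk
  rcases mul_eq_zero.1 hroot with hpk | hqk <;> omega

theorem crossCard_le_balancedCrossCard {p q m : ℕ} (hm : p + q = m) (h : 2 ≤ m) :
    crossCard p q ≤ balancedCrossCard m := by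
  subst hm
  have hpq := mul_le_half_mul_half p q
  have hhalf : (p + q) / 2 + (p + q - (p + q) / 2) = p + q := by omega
  rw [balancedCrossCard]
  generalize (p + q) / 2 = k, p + q - (p + q) / 2 = l at *
  rify [cast_crossCard] at *
  rw [hhalf]
  have : (0 : ℝ) ≤ p + q - 2 := by linarith
  gcongr

theorem eq_half_or_eq_half_of_crossCard_eq {p q m : ℕ} (hm : p + q = m) (h : 3 ≤ m)
    (heq : crossCard p q = balancedCrossCard m) : p = m / 2 ∨ q = m / 2 := by
  subst hm
  refine eq_half_or_eq_half_of_mul_eq ?_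
  have hhalf : (p + q) / 2 + (p + q - (p + q) / 2) = p + q := by omega
  rw [balancedCrossCard] at heq
  generalize (p + q) / 2 = k, p + q - (p + q) / 2 = l at *
  rify [cast_crossCard] at *
  rw [hhalf] at heq
  have : (p + q - 2 : ℝ) ≠ 0 := by linarith
  field_simp at heq
  linarith

theorem le_balancedCrossCard {m : ℕ} (h : 2 ≤ m) :
    ((m : ℝ) ^ 2 - 1) * (m - 2) / 8 ≤ balancedCrossCard m := by
  obtain ⟨k, r, hr, rfl⟩ : ∃ k r, r ≤ 1 ∧ m = 2 * k + r := ⟨m / 2, m % 2, by omega, by omega⟩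
  rw [balancedCrossCard, show (2 * k + r) / 2 = k by omega, show 2 * k + r - k = k + r by omega,
    cast_crossCard]
  have hk : (1 : ℝ) ≤ k := mod_cast (by omega : 1 ≤ k)
  interval_cases r <;> push_cast <;> nlinarith

theorem balancedCrossCard_le {m : ℕ} (h : 2 ≤ m) :
    (balancedCrossCard m : ℝ) ≤ (m : ℝ) ^ 2 * (m - 2) / 8 := by
  obtain ⟨k, r, hr, rfl⟩ : ∃ k r, r ≤ 1 ∧ m = 2 * k + r := ⟨m / 2, m % 2, by omega, by omega⟩
  rw [balancedCrossCard, show (2 * k + r) / 2 = k by omega, show 2 * k + r - k = k + r by omega,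
    cast_crossCard]
  have hk : (1 : ℝ) ≤ k := mod_cast (by omega : 1 ≤ k)
  interval_cases r <;> push_cast <;> nlinarith

theorem le_balancedCrossCard_sub {m : ℕ} (h : 3 ≤ m) :
    (3 * (m : ℝ) ^ 2 - 8 * m + 5) / 8 ≤
      (balancedCrossCard m : ℝ) - balancedCrossCard (m - 1) := by
  have hlower := le_balancedCrossCard (by omega : 2 ≤ m)
  have hupper := balancedCrossCard_le (by omega : 2 ≤ m - 1)
  rw [Nat.cast_pred (by omega)] at hupper
  linarith

end CrossCard

section Induced

variable {α : Type*} [DecidableEq α] {F : Finset (Finset α)} {U V P : Finset α} {x : α}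

/-- The triples of `V` meeting both `P` and its complement in `V`. -/
def cross (V P : Finset α) : Finset (Finset α) :=
  {e ∈ powersetCard 3 V | ¬e ⊆ P ∧ ¬e ⊆ V \ P}

theorem cross_sdiff (hP : P ⊆ V) : cross V (V \ P) = cross V P := by
  simp only [cross, Finset.sdiff_sdiff_eq_self hP, and_comm]

theorem card_cross (hP : P ⊆ V) : #(cross V P) = crossCard #P #(V \ P) := by
  have hsplit : powersetCard 3 V = cross V P ∪ (powersetCard 3 P ∪ powersetCard 3 (V \ P)) := by
    ext e
    have hP' : e ⊆ P → e ⊆ V := fun h => h.trans hP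
    have hPc : e ⊆ V \ P → e ⊆ V := fun h => h.trans sdiff_subset
    simp only [cross, mem_union, mem_filter, mem_powersetCard]
    tauto
  have hparts : Disjoint (powersetCard 3 P) (powersetCard 3 (V \ P)) := by
    refine disjoint_left.2 fun e he he' => ?_
    rw [mem_powersetCard] at he he'
    have := card_le_card <| le_inf he.1 he'.1
    simp [he.2] at this
  have hcross : Disjoint (cross V P) (powersetCard 3 P ∪ powersetCard 3 (V \ P)) := by
    refine disjoint_left.2 fun e he he' => ?_
    simp only [cross, mem_union, mem_filter, mem_powersetCard] at he he'
    tauto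
  have hcard := congrArg card hsplit
  rw [card_union_of_disjoint hcross, card_union_of_disjoint hparts, card_powersetCard,
    card_powersetCard, card_powersetCard, ← card_sdiff_add_card_eq_card hP, add_comm #(V \ P),
    add_choose_three] at hcard
  omega

theorem card_cross_of_card_eq_half (hP : P ⊆ V) (hcard : #P = #V / 2) :
    #(cross V P) = balancedCrossCard #V := by
  rw [card_cross hP, card_sdiff_of_subset hP, hcard, balancedCrossCard]

/-- The edges of the sub-3-graph of `F` induced by `U`. -/
def inducedEdges (F : Finset (Finset α)) (U : Finset α) : Finset (Finset α) := {e ∈ F | e ⊆ U}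

theorem mem_inducedEdges {e : Finset α} : e ∈ inducedEdges F U ↔ e ∈ F ∧ e ⊆ U := mem_filter

theorem card_inducedEdges_le_pow (hF : (F : Set (Finset α)).Sized 3) (U : Finset α) :
    #(inducedEdges F U) ≤ #U ^ 3 :=
  calc #(inducedEdges F U) ≤ #(powersetCard 3 U) := card_le_card fun e he =>
        mem_powersetCard.2 ⟨(mem_inducedEdges.1 he).2, hF (mem_inducedEdges.1 he).1⟩
    _ ≤ #U ^ 3 := by
        rw [card_powersetCard]
        exact Nat.choose_le_pow _ _

theorem inducedEdges_subset_cross (hF : (F : Set (Finset α)).Sized 3)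
    (hP : ∀ x ∈ P, ∀ y ∈ P, ∀ z ∈ P, ¬Edge F x y z)
    (hPc : ∀ x ∈ U \ P, ∀ y ∈ U \ P, ∀ z ∈ U \ P, ¬Edge F x y z) :
    inducedEdges F U ⊆ cross U P := by
  intro e he
  obtain ⟨heF, heU⟩ := mem_inducedEdges.1 he
  obtain ⟨x, y, z, -, -, -, rfl⟩ := card_eq_three.1 (hF heF)
  refine mem_filter.2 ⟨mem_powersetCard.2 ⟨heU, hF heF⟩, fun h => ?_, fun h => ?_⟩
  · exact hP x (h (by simp)) y (h (by simp)) z (h (by simp)) heF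
  · exact hPc x (h (by simp)) y (h (by simp)) z (h (by simp)) heF

theorem two_mul_card_filter_mem_inducedEdges_le (hF : (F : Set (Finset α)).Sized 3) :
    2 * #{e ∈ inducedEdges F U | x ∈ e} ≤ linkDeg F U x := by
  rw [← mul_one (linkDeg F U x), mul_comm, linkDeg]
  refine card_mul_le_card_mul (fun e p => e = {x, p.1, p.2}) (fun e he => ?_) fun p _ => ?_
  · simp only [mem_filter, mem_inducedEdges] at he
    obtain ⟨⟨heF, heU⟩, hxe⟩ := he
    obtain ⟨y, z, hyz, hyz'⟩ := card_eq_two.1 (card_erase_of_mem hxe |>.trans (by rw [hF heF]))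
    obtain rfl : {x, y, z} = e := by rw [← hyz', insert_erase hxe]
    rw [← card_pair fun h : (y, z) = (z, y) => hyz (Prod.mk.inj h).1]
    refine card_le_card fun p hp => ?_
    simp only [insert_subset_iff, singleton_subset_iff, mem_insert, mem_singleton] at heU hp
    rw [mem_bipartiteAbove, mem_filter, mem_product]
    rcases hp with rfl | rfl <;> simp [Edge, heU, heF, pair_comm z y]
  · exact card_le_one.2 fun e he e' he' =>
      (mem_filter.1 he).2.trans (mem_filter.1 he').2.symm

theorem card_inducedEdges_erase (x : α) :
    #(inducedEdges F (U.erase x)) + #{e ∈ inducedEdges F U | x ∈ e} = #(inducedEdges F U) := by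
  rw [← card_filter_add_card_filter_not (s := inducedEdges F U) (x ∈ ·), add_comm]
  congr 2
  ext e
  simp only [inducedEdges, mem_filter, subset_erase, and_assoc]

-- Maximise the number of edges minus `f`: deleting a vertex of the maximiser cannot increase it.
theorem exists_subset_forall_le_linkDeg (hF : (F : Set (Finset α)).Sized 3) (f : ℕ → ℝ)
    (V : Finset α) :
    ∃ U ⊆ V, (#(inducedEdges F V) : ℝ) - f #V ≤ #(inducedEdges F U) - f #U ∧
      ∀ x ∈ U, 2 * (f #U - f (#U - 1)) ≤ linkDeg F U x := by
  obtain ⟨U, hU, hmax⟩ := exists_max_image V.powerset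
    (fun U => (#(inducedEdges F U) : ℝ) - f #U) ⟨V, mem_powerset_self V⟩
  rw [mem_powerset] at hU
  refine ⟨U, hU, hmax V (mem_powerset_self V), fun x hx => ?_⟩
  have herase := hmax (U.erase x) (mem_powerset.2 ((erase_subset _ _).trans hU))
  have hcard := card_inducedEdges_erase (F := F) (U := U) x
  have hdeg := two_mul_card_filter_mem_inducedEdges_le hF (U := U) (x := x)
  rw [card_erase_of_mem hx] at herase
  rify at hcard hdeg
  linarith

theorem linkDeg_le_linkDeg_add (U V : Finset α) (x : α) :
    linkDeg F V x ≤ linkDeg F U x + 2 * #(V \ U) * #V := by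
  have hsub : ({p ∈ V ×ˢ V | Edge F x p.1 p.2} : Finset (α × α)) ⊆
      {p ∈ U ×ˢ U | Edge F x p.1 p.2} ∪ ((V \ U) ×ˢ V ∪ V ×ˢ (V \ U)) := by
    intro p
    simp only [mem_filter, mem_union, mem_product, Finset.mem_sdiff]
    tauto
  calc linkDeg F V x ≤ _ := card_le_card hsub
    _ ≤ _ := card_union_le _ _
    _ ≤ linkDeg F U x + (#(V \ U) * #V + #V * #(V \ U)) := by
        rw [linkDeg, ← card_product, ← card_product]
        gcongr
        exact card_union_le _ _
    _ = _ := by ring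

end Induced

section Extremal

variable {α : Type*} [DecidableEq α] {F : Finset (Finset α)} {V : Finset α}

theorem HasLargeLinks.exists_inducedEdges_subset_cross {δ : ℝ} (h : HasLargeLinks F V δ) :
    ∃ P ⊆ V, inducedEdges F V ⊆ cross V P := by
  obtain ⟨P, hPV, hP, hPc⟩ := h.exists_bipartition
  exact ⟨P, hPV, inducedEdges_subset_cross h.fanoFree.sized hP hPc⟩

theorem card_inducedEdges_le_balancedCrossCard {P : Finset α} (hV : 2 ≤ #V) (hP : P ⊆ V)
    (h : inducedEdges F V ⊆ cross V P) : #(inducedEdges F V) ≤ balancedCrossCard #V :=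
  (card_le_card h).trans <| (card_cross hP).trans_le <| crossCard_le_balancedCrossCard
    (by rw [add_comm, card_sdiff_add_card_eq_card hP]) hV

theorem eq_cross_of_balancedCrossCard_le {G : Finset (Finset α)} {P : Finset α} (hV : 3 ≤ #V)
    (hP : P ⊆ V) (hG : G ⊆ cross V P) (hle : balancedCrossCard #V ≤ #G) :
    ∃ Q ⊆ V, #Q = #V / 2 ∧ G = cross V Q := by
  have hparts : #P + #(V \ P) = #V := by rw [add_comm, card_sdiff_add_card_eq_card hP]
  have hcross := crossCard_le_balancedCrossCard hparts (by omega)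
  rw [← card_cross hP] at hcross
  obtain rfl := eq_of_subset_of_card_le hG (hcross.trans hle)
  rw [card_cross hP] at hle hcross
  obtain hhalf | hhalf := eq_half_or_eq_half_of_crossCard_eq hparts hV (hcross.antisymm hle)
  · exact ⟨P, hP, hhalf, rfl⟩
  · exact ⟨V \ P, sdiff_subset, hhalf, (cross_sdiff hP).symm⟩

-- Subtracting `m` from the extremal number makes a maximal subset have large links, while the
-- resulting bipartition shows that nothing was gained by passing to a proper subset.
theorem FanoFree.exists_inducedEdges_eq_cross (hF : FanoFree F) (hV : 10 ^ 55 ≤ #V)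
    (h : balancedCrossCard #V ≤ #(inducedEdges F V)) :
    ∃ P ⊆ V, #P = #V / 2 ∧ inducedEdges F V = cross V P := by
  obtain ⟨U, hUV, hmax, hdeg⟩ :=
    exists_subset_forall_le_linkDeg hF.sized (fun m => (balancedCrossCard m : ℝ) - m) V
  have hle : (balancedCrossCard #V : ℝ) ≤ #(inducedEdges F V) := mod_cast h
  have hU : 10 ^ 18 ≤ #U := by
    by_contra! hlt
    have hcube := (card_inducedEdges_le_pow hF.sized U).trans (Nat.pow_le_pow_left hlt.le 3)
    rify at hcube hlt hV
    have : (0 : ℝ) ≤ balancedCrossCard #U := Nat.cast_nonneg _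
    linarith
  have hlarge : HasLargeLinks F U (1 / 10 ^ 8) := by
    have hU' : (10 : ℝ) ^ 18 ≤ #U := mod_cast hU
    refine ⟨hF, by positivity, le_rfl, by linarith, fun x hx => le_trans ?_ (hdeg x hx)⟩
    have hsub := le_balancedCrossCard_sub (m := #U) (by omega)
    have hsq : (10 : ℝ) ^ 18 * #U ≤ #U ^ 2 := by
      rw [sq]
      gcongr
    rw [Nat.cast_pred (by omega)]
    linarith
  obtain ⟨P, hP, hcross⟩ := hlarge.exists_inducedEdges_subset_cross
  have hVU : #V ≤ #U := by
    have hupper := card_inducedEdges_le_balancedCrossCard (by omega) hP hcross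
    rify at hupper ⊢
    linarith
  obtain rfl := eq_of_subset_of_card_le hUV hVU
  exact eq_cross_of_balancedCrossCard_le (by omega) hP hcross h

theorem FanoFree.card_inducedEdges_le (hF : FanoFree F) (hV : 10 ^ 55 ≤ #V) :
    #(inducedEdges F V) ≤ balancedCrossCard #V := by
  by_contra! hlt
  obtain ⟨P, hP, hhalf, hcross⟩ := hF.exists_inducedEdges_eq_cross hV hlt.le
  exact hlt.ne' <| by rw [hcross, card_cross_of_card_eq_half hP hhalf]

-- A vertex of much larger degree would lie in a `K₄` of vertices of large degree, against
-- `FanoFree.weightSum_le`.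
theorem FanoFree.linkDeg_lt_of_forall_le_linkDeg (hF : FanoFree F) (hV : V.Nonempty)
    (hdeg : ∀ x ∈ V, (3 / 4 - 8 / 10 ^ 4) * #V ^ 2 ≤ (linkDeg F V x : ℝ)) (v : α) :
    (linkDeg F V v : ℝ) < (3 / 4 + 1 / 100) * #V ^ 2 := by
  by_contra! hv
  have hpos : (0 : ℝ) < #V ^ 2 := by
    have := hV.card_pos
    positivity
  have hempty : (#(∅ : Finset α) : ℝ) ≤ #V / 100 := by
    rw [card_empty, Nat.cast_zero]
    positivity
  obtain ⟨y, hy, z, hz, q, hq, -, hvyz, hvyq, hvzq, hyzq⟩ := exists_edge_of_le_linkDeg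
    (ε := 8 / 10 ^ 4) (by norm_num) hV hempty (by linarith : _ ≤ (linkDeg F V v : ℝ)) hdeg
  have hsum := hF.weightSum_le (isK4_of_edge hvyz hvyq hvzq hyzq) V
  rw [weightSum_eq_sum_linkDeg, Fin.sum_univ_four] at hsum
  replace hsum := (Nat.cast_le (α := ℝ)).2 hsum
  push_cast at hsum
  change (linkDeg F V v + linkDeg F V y + linkDeg F V z + linkDeg F V q : ℝ) ≤ _ at hsum
  linarith [hdeg y hy, hdeg z hz, hdeg q hq]

theorem FanoFree.exists_subset_le_linkDeg (hF : FanoFree F) (hV : 10 ^ 57 ≤ #V)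
    (h : (1 / 8 - 1 / 10 ^ 10) * #V ^ 3 ≤ (#(inducedEdges F V) : ℝ)) :
    ∃ U ⊆ V, (1 - 1 / 10 ^ 6) * #V ≤ (#U : ℝ) ∧
      ∀ x ∈ U, (3 / 4 - 8 / 10 ^ 4) * #U ^ 2 ≤ (linkDeg F U x : ℝ) := by
  obtain ⟨U, hUV, hmax, hdeg⟩ :=
    exists_subset_forall_le_linkDeg hF.sized (fun m => (1 / 8 - 1 / 10 ^ 4) * (m : ℝ) ^ 3) V
  have hV' : (10 : ℝ) ^ 57 ≤ #V := mod_cast hV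
  have hV₀ : (0 : ℝ) < #V ^ 3 := by positivity
  have hU : (10 : ℝ) ^ 55 ≤ #U := by
    by_contra! hlt
    have hcube : (#(inducedEdges F U) : ℝ) ≤ #U ^ 3 := mod_cast card_inducedEdges_le_pow hF.sized U
    have hUV' : (100 * #U : ℝ) ^ 3 ≤ #V ^ 3 := by
      gcongr
      linarith
    nlinarith
  have hU' : 10 ^ 55 ≤ #U := mod_cast hU
  have hupper : (#(inducedEdges F U) : ℝ) ≤ #U ^ 3 / 8 :=
    calc (#(inducedEdges F U) : ℝ) ≤ balancedCrossCard #U := mod_cast hF.card_inducedEdges_le hU'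
      _ ≤ #U ^ 2 * (#U - 2) / 8 := balancedCrossCard_le (by omega)
      _ ≤ #U ^ 3 / 8 := by nlinarith
  refine ⟨U, hUV, ?_, fun x hx => le_trans ?_ (hdeg x hx)⟩
  · by_contra! hlt
    have hcube : (#U : ℝ) ^ 3 ≤ ((1 - 1 / 10 ^ 6) * #V) ^ 3 := by gcongr
    rw [mul_pow] at hcube
    linarith
  · have hsq : (10 : ℝ) ^ 55 * #U ≤ #U ^ 2 := by
      rw [sq]
      gcongr
    rw [Nat.cast_pred (by omega)]
    linarith

theorem FanoFree.linkDeg_lt (hF : FanoFree F) (hV : 10 ^ 57 ≤ #V)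
    (h : (1 / 8 - 1 / 10 ^ 10) * #V ^ 3 ≤ (#(inducedEdges F V) : ℝ)) (v : α) :
    (linkDeg F V v : ℝ) < (3 / 4 + 1 / 50) * #V ^ 2 := by
  obtain ⟨U, hUV, hU, hdeg⟩ := hF.exists_subset_le_linkDeg hV h
  have hV₀ : (0 : ℝ) < #V := Nat.cast_pos.2 (by omega)
  have hU₀ : U.Nonempty := card_pos.1 <| Nat.cast_pos.1 <| lt_of_lt_of_le (by linarith) hU
  have hUV' : (#U : ℝ) ≤ #V := mod_cast card_le_card hUV
  have hlink := hF.linkDeg_lt_of_forall_le_linkDeg hU₀ hdeg v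
  have hadd := linkDeg_le_linkDeg_add (F := F) U V v
  have hsdiff := card_sdiff_add_card_eq_card hUV
  rify at hadd hsdiff
  have hrest : (#(V \ U) : ℝ) * #V ≤ 1 / 10 ^ 6 * #V * #V := by
    gcongr
    linarith
  have hsq : (#U : ℝ) ^ 2 ≤ #V ^ 2 := by gcongr
  nlinarith

end Extremal

/-! ### Disjoint Fano planes -/

section FanoMatching

variable {α : Type*} [DecidableEq α] {F G : Finset (Finset α)} {S T U V W P : Finset α} {v w : α}
  {k t : ℕ}

/-- `S` is the vertex set of a copy of the Fano plane in the 3-graph with edge set `F`. -/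
def IsFanoSet (F : Finset (Finset α)) (S : Finset α) : Prop :=
  #S = 7 ∧ ∃ p q r x y z w, S = {p, q, r, x, y, z, w} ∧ IsFano F p q r x y z w

/-- The 3-graph with edge set `F` contains `k` pairwise vertex-disjoint Fano planes. -/
def HasFanoMatching (F : Finset (Finset α)) (k : ℕ) : Prop :=
  ∃ S : Fin k → Finset α, (∀ i, IsFanoSet F (S i)) ∧ Pairwise fun i j => Disjoint (S i) (S j)

theorem IsFanoSet.mono (h : G ⊆ F) (hS : IsFanoSet G S) : IsFanoSet F S := by
  obtain ⟨hcard, p, q, r, x, y, z, w, rfl, hfano⟩ := hS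
  exact ⟨hcard, p, q, r, x, y, z, w, rfl, hfano.mono h⟩

theorem IsFanoSet.exists_mem (hS : IsFanoSet F S) (hv : v ∈ S) : ∃ e ∈ F, v ∈ e := by
  obtain ⟨-, p, q, r, x, y, z, w, rfl, hpqr, hpxy, hpzw, -⟩ := hS
  simp only [mem_insert, mem_singleton] at hv
  obtain rfl | rfl | rfl | rfl | rfl | rfl | rfl := hv
  exacts [⟨_, hpqr, by simp⟩, ⟨_, hpqr, by simp⟩, ⟨_, hpqr, by simp⟩, ⟨_, hpxy, by simp⟩,
    ⟨_, hpxy, by simp⟩, ⟨_, hpzw, by simp⟩, ⟨_, hpzw, by simp⟩]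

theorem Edge.ne (hF : (F : Set (Finset α)).Sized 3) {x y z : α} (h : Edge F x y z) :
    x ≠ y ∧ x ≠ z ∧ y ≠ z := by
  refine ⟨?_, ?_, ?_⟩ <;> rintro rfl
  · exact not_edge_right_self hF (edge_right_comm.1 (edge_left_comm.1 (edge_right_comm.1 h)))
  · exact not_edge_right_self hF (edge_left_comm.1 h)
  · exact not_edge_right_self hF h

theorem IsFano.isFanoSet (hF : (F : Set (Finset α)).Sized 3) {p q r x y z w : α}
    (h : IsFano F p q r x y z w) : IsFanoSet F {p, q, r, x, y, z, w} := by
  refine ⟨?_, p, q, r, x, y, z, w, rfl, h⟩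
  obtain ⟨hpqr, hpxy, hpzw, hqxz, hqyw, hrxw, hryz⟩ := h
  have := hpqr.ne hF
  have := hpxy.ne hF
  have := hpzw.ne hF
  have := hqxz.ne hF
  have := hqyw.ne hF
  have := hrxw.ne hF
  have := hryz.ne hF
  repeat rw [card_insert_of_notMem]
  all_goals simp only [card_singleton, mem_insert, mem_singleton]
  all_goals tauto

theorem exists_isFanoSet (hF : (F : Set (Finset α)).Sized 3) (h : ¬FanoFree F) :
    ∃ S, IsFanoSet F S := by
  contrapose! h
  exact ⟨hF, fun p q r x y z w hfano => h _ (hfano.isFanoSet hF)⟩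

theorem inducedEdges_subset : inducedEdges F U ⊆ F := filter_subset _ F

theorem exists_fanoFree_inducedEdges_sdiff (hF : (F : Set (Finset α)).Sized 3)
    (hno : ¬HasFanoMatching F (t + 1)) (h : HasFanoMatching (inducedEdges F U) t) :
    ∃ W ⊆ U, #W = 7 * t ∧ FanoFree (inducedEdges F (V \ W)) := by
  obtain ⟨S, hS, hdisj⟩ := h
  refine ⟨univ.biUnion S, biUnion_subset.2 fun i _ a ha => ?_, ?_, ?_⟩
  · obtain ⟨e, he, hae⟩ := (hS i).exists_mem ha
    exact (mem_inducedEdges.1 he).2 hae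
  · rw [card_biUnion fun i _ j _ hij => hdisj hij, sum_congr rfl fun i _ => (hS i).1, sum_const,
      card_univ, Fintype.card_fin, smul_eq_mul, mul_comm]
  · by_contra hfano
    obtain ⟨T, hT⟩ := exists_isFanoSet (hF.mono (coe_subset.2 inducedEdges_subset)) hfano
    have hTS (i) : Disjoint T (S i) := disjoint_left.2 fun a ha hai => by
      obtain ⟨e, he, hae⟩ := hT.exists_mem ha
      exact (Finset.mem_sdiff.1 ((mem_inducedEdges.1 he).2 hae)).2
        (mem_biUnion.2 ⟨i, mem_univ i, hai⟩)
    refine hno ⟨Fin.cons T S, Fin.cases (hT.mono inducedEdges_subset) fun i =>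
      (hS i).mono inducedEdges_subset, ?_⟩
    refine Fin.cases (Fin.cases (absurd rfl) fun j _ => hTS j) fun i => Fin.cases (fun _ => ?_) ?_
    · exact (hTS i).symm
    · exact fun j hij => hdisj (ne_of_apply_ne Fin.succ hij)

end FanoMatching

section JoinCross

theorem sized_of_subset_powersetCard {α : Type*} {F : Finset (Finset α)} {V : Finset α} {r : ℕ}
    (hF : F ⊆ powersetCard r V) : (F : Set (Finset α)).Sized r :=
  (Set.sized_powersetCard V r).mono (coe_subset.2 hF)

variable {α : Type*} [DecidableEq α] {F : Finset (Finset α)} {T U V W P : Finset α} {v : α}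

theorem card_filter_mem_powersetCard (hv : v ∈ V) (r : ℕ) :
    #{e ∈ powersetCard (r + 1) V | v ∈ e} = (#V - 1).choose r := by
  have hnot : {e ∈ powersetCard (r + 1) V | v ∉ e} = powersetCard (r + 1) (V.erase v) := by
    ext e
    simp only [mem_filter, mem_powersetCard, subset_erase, and_right_comm]
  have hsplit := card_filter_add_card_filter_not (s := powersetCard (r + 1) V) (v ∈ ·)
  rw [hnot, card_powersetCard, card_powersetCard, card_erase_of_mem hv,
    ← Nat.sub_add_cancel (one_le_card.2 ⟨v, hv⟩), Nat.choose_succ_succ',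
    Nat.add_sub_cancel] at hsplit
  omega

theorem card_filter_mem_le (hF : F ⊆ powersetCard 3 V) (hv : v ∈ V) :
    #{e ∈ F | v ∈ e} ≤ (#V - 1).choose 2 := by
  rw [← card_filter_mem_powersetCard hv 2]
  gcongr

theorem card_le_card_inducedEdges_add_sum (hF : F ⊆ powersetCard 3 V) (W : Finset α) :
    #F ≤ #(inducedEdges F (V \ W)) + ∑ w ∈ W, #{e ∈ F | w ∈ e} := by
  have hsub : F ⊆ inducedEdges F (V \ W) ∪ W.biUnion fun w => {e ∈ F | w ∈ e} := by
    intro e he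
    by_cases heW : Disjoint e W
    · exact mem_union_left _ <| mem_inducedEdges.2
        ⟨he, subset_sdiff.2 ⟨(mem_powersetCard.1 (hF he)).1, heW⟩⟩
    · obtain ⟨w, hwe, hwW⟩ := not_disjoint_iff.1 heW
      exact mem_union_right _ <| mem_biUnion.2 ⟨w, hwW, mem_filter.2 ⟨he, hwe⟩⟩
  calc #F ≤ _ := card_le_card hsub
    _ ≤ _ := card_union_le _ _
    _ ≤ _ := by
        gcongr
        exact card_biUnion_le

theorem inducedEdges_eq_self (hF : F ⊆ powersetCard 3 V) : inducedEdges F V = F :=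
  filter_true_of_mem fun _ he => (mem_powersetCard.1 (hF he)).1

theorem inducedEdges_inducedEdges_self : inducedEdges (inducedEdges F U) U = inducedEdges F U :=
  filter_true_of_mem fun _ he => (mem_inducedEdges.1 he).2

theorem linkDeg_inducedEdges_self (hv : v ∈ U) :
    linkDeg (inducedEdges F U) U v = linkDeg F U v := by
  rw [linkDeg, linkDeg]
  congr 1
  ext p
  rw [mem_filter, mem_filter, mem_product, Edge, Edge, mem_inducedEdges, insert_subset_iff,
    insert_subset_iff, singleton_subset_iff]
  tauto

/-- The edges of the join of the complete 3-graph on `T` with the complete bipartite 3-graph on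
`V \ T` whose parts are `P` and `(V \ T) \ P`. -/
def joinCross (V T P : Finset α) : Finset (Finset α) :=
  {e ∈ powersetCard 3 V | ¬e ⊆ P ∧ ¬e ⊆ (V \ T) \ P}

theorem joinCross_empty : joinCross V ∅ P = cross V P := by
  rw [joinCross, sdiff_empty, cross]

theorem card_joinCross (hP : P ⊆ V \ T) (hhalf : #P = #(V \ T) / 2) :
    #(joinCross V T P) + (#(V \ T)).choose 3 = (#V).choose 3 + balancedCrossCard #(V \ T) := by
  have hsplit : joinCross V T P =
      (powersetCard 3 V \ powersetCard 3 (V \ T)) ∪ cross (V \ T) P := by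
    ext e
    have hP' : e ⊆ P → e ⊆ V \ T := fun h => h.trans hP
    have hPc : e ⊆ (V \ T) \ P → e ⊆ V \ T := fun h => h.trans sdiff_subset
    have hV : e ⊆ V \ T → e ⊆ V := fun h => h.trans sdiff_subset
    simp only [joinCross, cross, mem_union, Finset.mem_sdiff, mem_filter, mem_powersetCard]
    tauto
  have hdisj : Disjoint (powersetCard 3 V \ powersetCard 3 (V \ T)) (cross (V \ T) P) :=
    disjoint_sdiff_self_left.mono_right (filter_subset _ _)
  have hsub := card_sdiff_add_card_eq_card (powersetCard_mono sdiff_subset :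
    powersetCard 3 (V \ T) ⊆ powersetCard 3 V)
  rw [card_powersetCard, card_powersetCard] at hsub
  rw [hsplit, card_union_of_disjoint hdisj, card_cross_of_card_eq_half hP hhalf]
  omega

theorem eq_joinCross_insert (hF : F ⊆ powersetCard 3 V) (hP : P ⊆ V.erase v \ T)
    (hstar : ∀ e ∈ powersetCard 3 V, v ∈ e → e ∈ F)
    (herase : inducedEdges F (V.erase v) = joinCross (V.erase v) T P) :
    F = joinCross V (insert v T) P := by
  have hV : V \ insert v T = V.erase v \ T := by
    ext a
    simp only [Finset.mem_sdiff, mem_insert, mem_erase]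
    tauto
  have hvP : v ∉ P := fun h => notMem_erase v V (Finset.mem_sdiff.1 (hP h)).1
  have hvPc : v ∉ (V.erase v \ T) \ P := by simp
  ext e
  have he := congrArg (e ∈ ·) herase
  simp only [mem_inducedEdges, joinCross, mem_filter, mem_powersetCard, subset_erase,
    eq_iff_iff] at he
  rw [joinCross, hV, mem_filter]
  by_cases hv : v ∈ e
  · exact ⟨fun h => ⟨hF h, fun h => hvP (h hv), fun h => hvPc (h hv)⟩, fun h => hstar e h.1 hv⟩
  · rw [mem_powersetCard]
    have hVF : e ∈ F → e ⊆ V := fun h => (mem_powersetCard.1 (hF h)).1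
    tauto

end JoinCross

section MatchingExtremal

variable {α : Type*} [DecidableEq α] {F : Finset (Finset α)} {V W : Finset α} {v : α} {m t : ℕ}

theorem card_sdiff_eq_sub (hV : #V = m + t) (hW : W ⊆ V) (hWt : #W = 7 * t) :
    #(V \ W) = m - 6 * t := by
  rw [card_sdiff_of_subset hW, hWt, hV]
  omega

-- The bound `7 t · (39 / 100) m²` falls short of the `t · m² / 2` edges through `t` full vertices
-- together with the loss `(6 t) · 3 m² / 8` in shrinking the bipartite part.
theorem exists_lt_card_filter_mem (hm : 10 ^ 60 ≤ m) (ht : 1 ≤ t) (hmt : 10 ^ 20 * t ≤ m)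
    (hF : F ⊆ powersetCard 3 V) (hV : #V = m + t) (hW : W ⊆ V) (hWt : #W = 7 * t)
    (hfree : FanoFree (inducedEdges F (V \ W)))
    (hcard : t * m.choose 2 + balancedCrossCard m ≤ #F) :
    ∃ w ∈ W, 39 / 100 * (m : ℝ) ^ 2 < #{e ∈ F | w ∈ e} := by
  by_contra! hle
  have hU := card_sdiff_eq_sub hV hW hWt
  have hsum : ∑ w ∈ W, (#{e ∈ F | w ∈ e} : ℝ) ≤ 7 * t * (39 / 100 * (m : ℝ) ^ 2) := by
    refine (sum_le_card_nsmul W _ _ hle).trans_eq ?_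
    rw [hWt, nsmul_eq_mul]
    push_cast
    rfl
  have hrest : (#(inducedEdges F (V \ W)) : ℝ) ≤ (m - 6 * t) ^ 2 * (m - 6 * t - 2) / 8 := by
    have hturan := hfree.card_inducedEdges_le (V := V \ W) (by omega)
    rw [inducedEdges_inducedEdges_self, hU] at hturan
    have hbound := balancedCrossCard_le (m := m - 6 * t) (by omega)
    rw [Nat.cast_sub (by omega)] at hbound
    push_cast at hbound
    exact (Nat.cast_le.2 hturan).trans hbound
  have hF' : (#F : ℝ) ≤ #(inducedEdges F (V \ W)) + ∑ w ∈ W, (#{e ∈ F | w ∈ e} : ℝ) :=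
    mod_cast card_le_card_inducedEdges_add_sum hF W
  have hlower := le_balancedCrossCard (m := m) (by omega)
  rify [Nat.cast_choose_two] at hm ht hmt hcard
  have hmul : 10 ^ 20 * (t : ℝ) * (t * m) ≤ m * (t * m) := by gcongr
  have hsq : 10 ^ 60 * ((t : ℝ) * m) ≤ m * (t * m) := by gcongr
  have htm : (m : ℝ) ≤ t * m := le_mul_of_one_le_left (by linarith) ht
  have : 0 ≤ (t : ℝ) ^ 3 := by positivity
  nlinarith

theorem le_card_inducedEdges_sdiff (hm : 10 ^ 60 ≤ m) (hmt : 10 ^ 20 * t ≤ m)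
    (hF : F ⊆ powersetCard 3 V) (hV : #V = m + t) (hW : W ⊆ V) (hWt : #W = 7 * t)
    (hcard : balancedCrossCard m ≤ #F) :
    (1 / 8 - 1 / 10 ^ 10) * #(V \ W) ^ 3 ≤ (#(inducedEdges F (V \ W)) : ℝ) := by
  have hdeg (w) (hw : w ∈ W) : #{e ∈ F | w ∈ e} ≤ (2 * m) ^ 2 :=
    calc #{e ∈ F | w ∈ e} ≤ (#V - 1).choose 2 := card_filter_mem_le hF (hW hw)
      _ ≤ (#V - 1) ^ 2 := Nat.choose_le_pow _ _
      _ ≤ (2 * m) ^ 2 := by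
          gcongr
          omega
  have hF' := (card_le_card_inducedEdges_add_sum hF W).trans <|
    Nat.add_le_add_left (sum_le_card_nsmul W _ _ hdeg) _
  have hU : #(V \ W) ≤ m := by
    rw [card_sdiff_eq_sub hV hW hWt]
    omega
  have hlower := le_balancedCrossCard (m := m) (by omega)
  rw [hWt, smul_eq_mul] at hF'
  rify at hm hmt hF' hcard hU
  have hcube : (#(V \ W) : ℝ) ^ 3 ≤ m ^ 3 := by gcongr
  have hmul : 10 ^ 20 * (t : ℝ) * m ^ 2 ≤ m * m ^ 2 := by gcongr
  have hsq : (10 : ℝ) ^ 60 * m ^ 2 ≤ m * m ^ 2 := by gcongr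
  nlinarith

theorem card_filter_mem_le_of_fanoFree (hm : 10 ^ 60 ≤ m) (hmt : 10 ^ 20 * t ≤ m)
    (hF : F ⊆ powersetCard 3 V) (hV : #V = m + t) (hW : W ⊆ V) (hWt : #W = 7 * t)
    (hfree : FanoFree (inducedEdges F (V \ W))) (hcard : balancedCrossCard m ≤ #F)
    (hv : v ∈ V \ W) : (#{e ∈ F | v ∈ e} : ℝ) ≤ 39 / 100 * m ^ 2 := by
  have hU := card_sdiff_eq_sub hV hW hWt
  have hlink := hfree.linkDeg_lt (V := V \ W) (by omega) (by
    rw [inducedEdges_inducedEdges_self]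
    exact le_card_inducedEdges_sdiff hm hmt hF hV hW hWt hcard) v
  rw [linkDeg_inducedEdges_self hv] at hlink
  have hdeg := two_mul_card_filter_mem_inducedEdges_le (sized_of_subset_powersetCard hF)
    (U := V) (x := v) |>.trans (linkDeg_le_linkDeg_add (V \ W) V v)
  rw [inducedEdges_eq_self hF, Finset.sdiff_sdiff_eq_self hW, hWt, hV] at hdeg
  have hUm : #(V \ W) ≤ m := by omega
  rify at hm hmt hdeg hUm
  have hsq : (#(V \ W) : ℝ) ^ 2 ≤ m ^ 2 := by gcongr
  have hmul : 10 ^ 20 * (t : ℝ) * m ≤ m * m := by gcongr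
  have htm : (t : ℝ) ≤ m := by linarith
  have htt : (t : ℝ) * t ≤ t * m := by gcongr
  nlinarith

-- Deleting `7 t` vertices leaves a nearly extremal Fano-free 3-graph, whose degrees are too small
-- for it to contain the vertex of large degree found by `exists_lt_card_filter_mem`.
theorem exists_not_hasFanoMatching_erase (hm : 10 ^ 60 ≤ m) (ht : 1 ≤ t) (hmt : 10 ^ 20 * t ≤ m)
    (hF : F ⊆ powersetCard 3 V) (hV : #V = m + t) (hno : ¬HasFanoMatching F (t + 1))
    (hcard : (m + t).choose 3 + balancedCrossCard m ≤ #F + m.choose 3) :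
    ∃ v ∈ V, ¬HasFanoMatching (inducedEdges F (V.erase v)) t := by
  by_contra! hmatch
  replace hcard : t * m.choose 2 + balancedCrossCard m ≤ #F := by
    rw [add_choose_three, crossCard] at hcard
    linarith [Nat.zero_le (m * t.choose 2), Nat.zero_le (t.choose 3), mul_comm t (m.choose 2)]
  have hF3 := sized_of_subset_powersetCard hF
  have hremove (v) (hv : v ∈ V) :=
    exists_fanoFree_inducedEdges_sdiff (V := V) hF3 hno (hmatch v hv)
  obtain ⟨v₀, hv₀⟩ : V.Nonempty := card_pos.1 (by omega)
  obtain ⟨W, hW, hWt, hfree⟩ := hremove v₀ hv₀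
  replace hW := hW.trans (erase_subset _ _)
  obtain ⟨v, hv, hlarge⟩ := exists_lt_card_filter_mem hm ht hmt hF hV hW hWt hfree hcard
  obtain ⟨W', hW', hWt', hfree'⟩ := hremove v (hW hv)
  have hvW' : v ∈ V \ W' := Finset.mem_sdiff.2 ⟨hW hv, fun h => notMem_erase v V (hW' h)⟩
  exact hlarge.not_ge <| card_filter_mem_le_of_fanoFree hm hmt hF hV
    (hW'.trans (erase_subset _ _)) hWt' hfree' (by omega) hvW'

theorem hasFanoMatching_one (hF : (F : Set (Finset α)).Sized 3) (h : ¬FanoFree F) :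
    HasFanoMatching F 1 := by
  obtain ⟨S, hS⟩ := exists_isFanoSet hF h
  exact ⟨fun _ => S, fun _ => hS, fun i j hij => absurd (Subsingleton.elim i j) hij⟩

theorem FanoFree.exists_eq_cross (hfree : FanoFree F) (hF : F ⊆ powersetCard 3 V)
    (hV : 10 ^ 55 ≤ #V) (hcard : balancedCrossCard #V ≤ #F) :
    ∃ P ⊆ V, #P = #V / 2 ∧ F = cross V P := by
  simpa only [inducedEdges_eq_self hF] using
    hfree.exists_inducedEdges_eq_cross hV (by rwa [inducedEdges_eq_self hF])

theorem filter_mem_eq_of_choose_le_card (hF : F ⊆ powersetCard 3 V) (hv : v ∈ V)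
    (h : (#V - 1).choose 2 ≤ #{e ∈ F | v ∈ e}) :
    {e ∈ F | v ∈ e} = {e ∈ powersetCard 3 V | v ∈ e} :=
  eq_of_subset_of_card_le (filter_subset_filter _ hF) (by rwa [card_filter_mem_powersetCard hv 2])

theorem exists_eq_joinCross (hm : 10 ^ 60 ≤ m) (hmt : 10 ^ 20 * t ≤ m)
    (hF : F ⊆ powersetCard 3 V) (hV : #V = m + t) (hno : ¬HasFanoMatching F (t + 1))
    (hcard : (m + t).choose 3 + balancedCrossCard m ≤ #F + m.choose 3) :
    ∃ T ⊆ V, #T = t ∧ ∃ P ⊆ V \ T, #P = m / 2 ∧ F = joinCross V T P := by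
  induction t generalizing F V with
  | zero =>
    have hfree : FanoFree F := not_imp_comm.1 (hasFanoMatching_one
      (sized_of_subset_powersetCard hF)) hno
    rw [add_zero] at hV hcard
    obtain ⟨P, hP, hhalf, hcross⟩ := hfree.exists_eq_cross hF (by omega) (by rw [hV]; omega)
    exact ⟨∅, empty_subset V, card_empty, P, by rwa [sdiff_empty], hV ▸ hhalf,
      hcross.trans joinCross_empty.symm⟩
  | succ t ih =>
    obtain ⟨v, hv, hnov⟩ := exists_not_hasFanoMatching_erase hm (by omega) hmt hF hV hno hcard
    have hVv : #(V.erase v) = m + t := by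
      rw [card_erase_of_mem hv, hV, ← add_assoc, Nat.add_sub_cancel]
    have hdeg := card_filter_mem_le hF hv
    have hsplit := card_inducedEdges_erase (F := F) (U := V) v
    rw [inducedEdges_eq_self hF] at hsplit
    rw [← card_erase_of_mem hv, hVv] at hdeg
    have hpascal : (m + (t + 1)).choose 3 = (m + t).choose 2 + (m + t).choose 3 :=
      Nat.choose_succ_succ' (m + t) 2
    rw [hpascal] at hcard
    have hFv : inducedEdges F (V.erase v) ⊆ powersetCard 3 (V.erase v) := fun e he =>
      mem_powersetCard.2 ⟨(mem_inducedEdges.1 he).2,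
        sized_of_subset_powersetCard hF (mem_inducedEdges.1 he).1⟩
    obtain ⟨T, hT, hTt, P, hP, hhalf, hFT⟩ := ih (by omega) hFv hVv hnov (by omega)
    have hm' : #(V.erase v \ T) = m := by
      rw [card_sdiff_of_subset hT, hVv, hTt, add_tsub_cancel_right]
    have hcardT := card_joinCross hP (by rw [hm', hhalf])
    rw [hm', hVv, ← hFT] at hcardT
    have hstar := filter_mem_eq_of_choose_le_card hF hv (by
      rw [← card_erase_of_mem hv, hVv]
      omega)
    refine ⟨insert v T, insert_subset hv (hT.trans (erase_subset v V)), ?_, P, ?_, hhalf,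
      eq_joinCross_insert hF hP (fun e he hve => ?_) hFT⟩
    · rw [card_insert_of_notMem fun h => notMem_erase v V (hT h), hTt]
    · rwa [sdiff_insert, ← erase_sdiff_comm]
    · exact (mem_filter.1 (hstar ▸ mem_filter.2 ⟨he, hve⟩)).1

end MatchingExtremal

/-! ### The extremal hypergraphs and their isomorphisms -/

section JoinCrossMatching

variable {α : Type*} [DecidableEq α] {F : Finset (Finset α)} {S T U V P : Finset α} {x y z : α}

theorem not_monochromatic_of_edge_cross (h : Edge (cross V P) x y z) :
    ¬(x ∈ P ∧ y ∈ P ∧ z ∈ P) ∧ ¬(x ∉ P ∧ y ∉ P ∧ z ∉ P) := by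
  simp only [Edge, cross, mem_filter, mem_powersetCard, insert_subset_iff, singleton_subset_iff,
    Finset.mem_sdiff] at h
  tauto

theorem fanoFree_cross : FanoFree (cross V P) where
  sized := sized_of_subset_powersetCard (filter_subset _ _)
  not_isFano p q r x y z w := by
    rintro ⟨hpqr, hpxy, hpzw, hqxz, hqyw, hrxw, hryz⟩
    have := not_monochromatic_of_edge_cross hpqr
    have := not_monochromatic_of_edge_cross hpxy
    have := not_monochromatic_of_edge_cross hpzw
    have := not_monochromatic_of_edge_cross hqxz
    have := not_monochromatic_of_edge_cross hqyw
    have := not_monochromatic_of_edge_cross hrxw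
    have := not_monochromatic_of_edge_cross hryz
    grind

theorem IsFanoSet.inducedEdges (hS : IsFanoSet F S) (hSU : S ⊆ U) :
    IsFanoSet (inducedEdges F U) S := by
  obtain ⟨hcard, p, q, r, x, y, z, w, rfl, hpqr, hpxy, hpzw, hqxz, hqyw, hrxw, hryz⟩ := hS
  refine ⟨hcard, p, q, r, x, y, z, w, rfl, ?_⟩
  simp only [insert_subset_iff, singleton_subset_iff] at hSU
  simp only [IsFano, Edge, mem_inducedEdges, insert_subset_iff, singleton_subset_iff] at *
  tauto

theorem inducedEdges_joinCross_subset : inducedEdges (joinCross V T P) (V \ T) ⊆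
    cross (V \ T) P := fun e he => by
  simp only [mem_inducedEdges, joinCross, cross, mem_filter, mem_powersetCard] at he ⊢
  tauto

theorem IsFanoSet.exists_mem_of_joinCross (hS : IsFanoSet (joinCross V T P) S) :
    ∃ v ∈ S, v ∈ T := by
  by_contra! hST
  have hSV : S ⊆ V \ T := fun v hv => by
    obtain ⟨e, he, hve⟩ := hS.exists_mem hv
    exact Finset.mem_sdiff.2 ⟨(mem_powersetCard.1 (mem_filter.1 he).1).1 hve, hST v hv⟩
  obtain ⟨-, p, q, r, x, y, z, w, -, hfano⟩ :=
    (hS.inducedEdges hSV).mono inducedEdges_joinCross_subset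
  exact fanoFree_cross.not_isFano p q r x y z w hfano

theorem not_hasFanoMatching_joinCross : ¬HasFanoMatching (joinCross V T P) (#T + 1) := by
  rintro ⟨S, hS, hdisj⟩
  choose v hvS hvT using fun i => (hS i).exists_mem_of_joinCross
  have hinj : Function.Injective v := fun i j hij => by
    by_contra hne
    exact disjoint_left.1 (hdisj hne) (hvS i) (hij ▸ hvS j)
  have := card_le_card_of_injOn v (s := univ) (fun i _ => hvT i) hinj.injOn
  rw [card_univ, Fintype.card_fin] at this
  omega

end JoinCrossMatching

section FanoCopies

variable {F : Finset (Finset ℕ)} {H : HGraph 3} {S e : Finset ℕ} {f : ℕ → ℕ} {k : ℕ}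

theorem edges_subset_powersetCard {r : ℕ} (H : HGraph r) : H.edges ⊆ powersetCard r H.verts :=
  fun e he => mem_powersetCard.2 ⟨H.edges_sub e he, H.edges_card e he⟩

theorem mem_edges_ofEdges {r : ℕ} {V : Finset ℕ} {E : Finset (Finset ℕ)} :
    e ∈ (HGraph.ofEdges r V E).edges ↔ e ∈ E ∧ e ⊆ V ∧ #e = r :=
  mem_filter

theorem mem_edges_induce : e ∈ (H.induce S).edges ↔ e ∈ H.edges ∧ e ⊆ S := by
  rw [HGraph.induce, mem_edges_ofEdges, mem_filter, subset_inter_iff]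
  have hsub := H.edges_sub e
  have hcard := H.edges_card e
  tauto

theorem image_fano_verts : fano.verts.image f = {f 1, f 2, f 3, f 5, f 6, f 7, f 4} := by
  rw [show fano.verts = {1, 2, 3, 5, 6, 7, 4} by decide]
  simp only [image_insert, image_singleton]

theorem forall_mem_fano_edges_image_mem_iff :
    (∀ e ∈ fano.edges, e.image f ∈ F) ↔ IsFano F (f 1) (f 2) (f 3) (f 5) (f 6) (f 7) (f 4) := by
  have hedges : fano.edges = {{1, 2, 3}, {1, 5, 6}, {1, 7, 4}, {2, 5, 7}, {2, 6, 4}, {3, 5, 4},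
      {3, 6, 7}} := by decide
  simp only [hedges, forall_mem_insert, mem_singleton, forall_eq, image_insert, image_singleton,
    IsFano, Edge]

theorem isFanoSet_of_isCopyIn_induce (hcard : #S = 7) (h : fano.IsCopyIn (H.induce S)) :
    IsFanoSet H.edges S := by
  obtain ⟨f, hinj, hverts, hedges⟩ := h
  have himage : fano.verts.image f = S := by
    refine eq_of_subset_of_card_le (image_subset_iff.2 fun v hv => ?_) ?_
    · exact (mem_inter.1 (hverts v hv)).2
    · rw [card_image_of_injOn hinj, hcard]
      rfl
  exact ⟨hcard, _, _, _, _, _, _, _, himage.symm.trans image_fano_verts,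
    forall_mem_fano_edges_image_mem_iff.1 fun e he => (mem_edges_induce.1 (hedges e he)).1⟩

/-- The labelling of the points of `fano` matching the order of the arguments of `IsFano`. -/
def fanoLabel (p q r x y z w : ℕ) : ℕ → ℕ
  | 1 => p
  | 2 => q
  | 3 => r
  | 4 => w
  | 5 => x
  | 6 => y
  | _ => z

theorem IsFanoSet.isCopyIn_induce (hS : IsFanoSet H.edges S) : fano.IsCopyIn (H.induce S) := by
  have hSH : S ⊆ H.verts := fun v hv => by
    obtain ⟨e, he, hve⟩ := hS.exists_mem hv
    exact H.edges_sub e he hve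
  obtain ⟨hcard, p, q, r, x, y, z, w, hSeq, hfano⟩ := hS
  have himage : fano.verts.image (fanoLabel p q r x y z w) = S := image_fano_verts.trans hSeq.symm
  refine ⟨fanoLabel p q r x y z w, injOn_of_card_image_eq ?_, fun v hv => ?_, fun e he => ?_⟩
  · rw [himage, hcard]
    rfl
  · have hvS := himage ▸ mem_image_of_mem _ hv
    exact mem_inter.2 ⟨hSH hvS, hvS⟩
  · exact mem_edges_induce.2 ⟨forall_mem_fano_edges_image_mem_iff.2 hfano e he,
      (image_subset_image (fano.edges_sub e he)).trans himage.subset⟩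

theorem hasMatching_fano_iff : fano.HasMatching H k ↔ HasFanoMatching H.edges k := by
  constructor
  · rintro ⟨S, hS, hdisj, hcopy⟩
    exact ⟨S, fun i => isFanoSet_of_isCopyIn_induce (hS i).2 (hcopy i), hdisj⟩
  · rintro ⟨S, hS, hdisj⟩
    refine ⟨S, fun i => ⟨fun v hv => ?_, (hS i).1⟩, fun i j hij => hdisj hij,
      fun i => (hS i).isCopyIn_induce⟩
    obtain ⟨e, he, hve⟩ := (hS i).exists_mem hv
    exact H.edges_sub e he hve

end FanoCopies

section Recolouring

variable {α β ι : Type*} [DecidableEq ι] {V : Finset α} {V' : Finset β}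

theorem exists_bijOn_comp_eq [Nonempty β] {c : α → ι} {c' : β → ι}
    (h : ∀ k, #{x ∈ V | c x = k} = #{y ∈ V' | c' y = k}) :
    ∃ f : α → β, Set.BijOn f V V' ∧ ∀ x ∈ V, c' (f x) = c x := by
  have hclass (k) : ∃ g : α → β, Set.BijOn g {x ∈ V | c x = k} {y ∈ V' | c' y = k} := by
    have := Set.Finite.exists_bijOn_of_encard_eq (finite_toSet {x ∈ V | c x = k})
      (t := (({y ∈ V' | c' y = k} : Finset β) : Set β))
      (by rw [Set.encard_coe_eq_coe_finsetCard, Set.encard_coe_eq_coe_finsetCard, h k])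
    simpa only [coe_filter] using this
  choose g hg using hclass
  have hmaps (x) (hx : x ∈ V) : g (c x) x ∈ V' ∧ c' (g (c x) x) = c x :=
    (hg (c x)).mapsTo ⟨hx, rfl⟩
  refine ⟨fun x => g (c x) x, ⟨fun x hx => (hmaps x hx).1, fun x hx y hy hxy => ?_,
    fun y hy => ?_⟩, fun x hx => (hmaps x hx).2⟩
  · have hxy : g (c x) x = g (c y) y := hxy
    have hc : c x = c y := by rw [← (hmaps x hx).2, ← (hmaps y hy).2, hxy]
    exact (hg (c x)).injOn ⟨hx, rfl⟩ ⟨hy, hc.symm⟩ (hxy.trans (by rw [hc]))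
  · obtain ⟨x, ⟨hx, hxc⟩, hxy⟩ := (hg (c' y)).surjOn ⟨hy, rfl⟩
    exact ⟨x, hx, (congrArg (g · x) hxc).trans hxy⟩

theorem card_filter_mem_of_bijOn [DecidableEq β] {S : Finset β} {f : α → β}
    (hf : Set.BijOn f V V') (hS : S ⊆ V') : #{x ∈ V | f x ∈ S} = #S := by
  refine card_nbij f (fun x hx => (mem_filter.1 hx).2) (hf.injOn.mono fun x hx => ?_)
    fun y hy => ?_
  · exact (mem_filter.1 hx).1
  · obtain ⟨x, hx, rfl⟩ := hf.surjOn (hS hy)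
    exact ⟨x, mem_filter.2 ⟨hx, hy⟩, rfl⟩

end Recolouring

section JoinCrossIso

variable {α β : Type*} [DecidableEq α] [DecidableEq β] {V T P e : Finset α} {V' T' P' : Finset β}
  {f : α → β}

theorem image_mem_joinCross_iff (hf : Set.BijOn f V V') (hT : ∀ x ∈ V, f x ∈ T' ↔ x ∈ T)
    (hP : ∀ x ∈ V, f x ∈ P' ↔ x ∈ P) (he : e ∈ powersetCard 3 V) :
    e.image f ∈ joinCross V' T' P' ↔ e ∈ joinCross V T P := by
  obtain ⟨heV, hcard⟩ := mem_powersetCard.1 he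
  have hmaps (x) (hx : x ∈ e) : f x ∈ V' := hf.mapsTo (heV hx)
  have hcard' : #(e.image f) = 3 := (card_image_of_injOn (hf.injOn.mono heV)).trans hcard
  have hsubP : e.image f ⊆ P' ↔ e ⊆ P :=
    image_subset_iff.trans (forall₂_congr fun x hx => hP x (heV hx))
  have hsubQ : e.image f ⊆ (V' \ T') \ P' ↔ e ⊆ (V \ T) \ P :=
    image_subset_iff.trans (forall₂_congr fun x hx => by
      simp only [Finset.mem_sdiff, hT x (heV hx), hP x (heV hx), hmaps x hx, heV hx])
  simp only [joinCross, mem_filter, mem_powersetCard, hsubP, hsubQ, image_subset_iff, hcard',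
    hcard, heV]
  tauto

theorem card_filter_decide_mem (hT : T ⊆ V) (hP : P ⊆ V \ T) (a b : Bool) :
    #{x ∈ V | (decide (x ∈ T), decide (x ∈ P)) = (a, b)} =
      if a then (if b then 0 else #T) else if b then #P else #V - #T - #P := by
  have hPV : P ⊆ V := hP.trans sdiff_subset
  have hPT (x) (hx : x ∈ P) : x ∉ T := (Finset.mem_sdiff.1 (hP hx)).2
  rw [← card_sdiff_of_subset hT, ← card_sdiff_of_subset hP, ← card_empty (α := α)]
  cases a <;> cases b <;> simp only [reduceIte, Bool.false_eq_true] <;> congr 1 <;> ext x <;>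
    have hTx := @hT x <;> have hPx := @hPV x <;> have hPTx := hPT x <;>
    simp only [mem_filter, Prod.mk.injEq, decide_eq_true_eq, decide_eq_false_iff_not,
      Finset.mem_sdiff, notMem_empty] <;>
    tauto

theorem exists_bijOn_mem_iff [Nonempty β] (hT : T ⊆ V) (hP : P ⊆ V \ T) (hT' : T' ⊆ V')
    (hP' : P' ⊆ V' \ T') (hVV' : #V = #V') (hTT' : #T = #T') (hPP' : #P = #P') :
    ∃ f : α → β, Set.BijOn f V V' ∧ (∀ x ∈ V, f x ∈ T' ↔ x ∈ T) ∧ ∀ x ∈ V, f x ∈ P' ↔ x ∈ P := by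
  obtain ⟨f, hf, hcomp⟩ := exists_bijOn_comp_eq (V := V) (V' := V')
    (c := fun x => (decide (x ∈ T), decide (x ∈ P)))
    (c' := fun y => (decide (y ∈ T'), decide (y ∈ P'))) fun (a, b) => by
      rw [card_filter_decide_mem hT hP, card_filter_decide_mem hT' hP', hVV', hTT', hPP']
  exact ⟨f, hf, fun x hx => decide_eq_decide.1 (Prod.mk.inj (hcomp x hx)).1,
    fun x hx => decide_eq_decide.1 (Prod.mk.inj (hcomp x hx)).2⟩

end JoinCrossIso

section ExtremalGraph

variable {m t : ℕ} {H J : HGraph 3}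

/-- `H` is isomorphic to `K_t ⋈ B_3(m)`: the part `T` is complete to everything, and the other
vertices are split into the halves `P` and its complement. -/
def IsJoinCross (m t : ℕ) (H : HGraph 3) : Prop :=
  #H.verts = m + t ∧ ∃ T ⊆ H.verts, #T = t ∧ ∃ P ⊆ H.verts \ T, #P = m / 2 ∧
    H.edges = joinCross H.verts T P

theorem IsJoinCross.of_iso (hJ : IsJoinCross m t J) (h : H.Iso J) : IsJoinCross m t H := by
  obtain ⟨hJcard, T, hT, hTt, P, hP, hhalf, hJ⟩ := hJ
  obtain ⟨f, hf, hedges⟩ := h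
  have hPJ : P ⊆ J.verts := hP.trans sdiff_subset
  refine ⟨(card_nbij f (fun x hx => hf.mapsTo hx) hf.injOn hf.surjOn).trans hJcard,
    {x ∈ H.verts | f x ∈ T}, filter_subset _ _, (card_filter_mem_of_bijOn hf hT).trans hTt,
    {x ∈ H.verts | f x ∈ P}, fun x hx => ?_, (card_filter_mem_of_bijOn hf hPJ).trans hhalf, ?_⟩
  · have hxP := mem_filter.1 hx
    exact Finset.mem_sdiff.2
      ⟨hxP.1, fun hxT => (Finset.mem_sdiff.1 (hP hxP.2)).2 (mem_filter.1 hxT).2⟩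
  · have hiff (e) (he : e ∈ powersetCard 3 H.verts) : e ∈ H.edges ↔
        e ∈ joinCross H.verts {x ∈ H.verts | f x ∈ T} {x ∈ H.verts | f x ∈ P} := by
      rw [hedges e he, hJ]
      exact image_mem_joinCross_iff hf (fun x hx => by rw [mem_filter, and_iff_right hx])
        (fun x hx => by rw [mem_filter, and_iff_right hx]) he
    exact Finset.ext fun e => ⟨fun he => (hiff e (edges_subset_powersetCard H he)).1 he,
      fun he => (hiff e (filter_subset _ _ he)).2 he⟩

theorem IsJoinCross.iso (hH : IsJoinCross m t H) (hJ : IsJoinCross m t J) : H.Iso J := by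
  obtain ⟨hHcard, T, hT, hTt, P, hP, hhalf, hH⟩ := hH
  obtain ⟨hJcard, T', hT', hTt', P', hP', hhalf', hJ⟩ := hJ
  obtain ⟨f, hf, hfT, hfP⟩ := exists_bijOn_mem_iff hT hP hT' hP' (hHcard.trans hJcard.symm)
    (hTt.trans hTt'.symm) (hhalf.trans hhalf'.symm)
  refine ⟨f, hf, fun e he => ?_⟩
  rw [hH, hJ, image_mem_joinCross_iff hf hfT hfP he]

theorem subset_right_iff_of_subset_union {α : Type*} [DecidableEq α] {A B e : Finset α}
    (hAB : Disjoint A B) (he : e ⊆ A ∪ B) : e ⊆ B ↔ ¬(e ∩ A).Nonempty := by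
  rw [not_nonempty_iff_eq_empty, ← disjoint_iff_inter_eq_empty]
  exact ⟨fun h => hAB.symm.mono_left h, fun h => h.left_le_of_le_sup_left he⟩

theorem mem_edges_completeOn {r : ℕ} {T e : Finset ℕ} :
    e ∈ (completeOn r T).edges ↔ e ⊆ T ∧ #e = r := by
  rw [completeOn, mem_edges_ofEdges, mem_powersetCard, and_self_iff]

theorem mem_edges_crossOn {r : ℕ} {P Q e : Finset ℕ} : e ∈ (crossOn r P Q).edges ↔
    ((e ∩ P).Nonempty ∧ (e ∩ Q).Nonempty) ∧ e ⊆ P ∪ Q ∧ #e = r := by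
  rw [crossOn, mem_edges_ofEdges, mem_filter, mem_powersetCard]
  tauto

theorem mem_edges_join {r : ℕ} {G H : HGraph r} {e : Finset ℕ} : e ∈ (G.join H).edges ↔
    (e ∈ G.edges ∨ e ∈ H.edges ∨ ((e ∩ G.verts).Nonempty ∧ (e ∩ H.verts).Nonempty)) ∧
      e ⊆ G.verts ∪ H.verts ∧ #e = r := by
  rw [HGraph.join, mem_edges_ofEdges, mem_union, mem_union, mem_filter, mem_powersetCard]
  tauto

theorem edges_completeOn_join_crossOn {T P Q : Finset ℕ} (hT : Disjoint T (P ∪ Q))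
    (hPQ : Disjoint P Q) :
    ((completeOn 3 T).join (crossOn 3 P Q)).edges = joinCross (T ∪ (P ∪ Q)) T P := by
  have hQ : ((T ∪ (P ∪ Q)) \ T) \ P = Q := by
    rw [union_sdiff_left, sdiff_eq_self_of_disjoint hT.symm, union_sdiff_left,
      sdiff_eq_self_of_disjoint hPQ.symm]
  have hvertsT : (completeOn 3 T).verts = T := rfl
  have hvertsPQ : (crossOn 3 P Q).verts = P ∪ Q := rfl
  obtain ⟨hTP, hTQ⟩ := disjoint_union_right.1 hT
  ext e
  rw [mem_edges_join, mem_edges_completeOn, mem_edges_crossOn, hvertsT, hvertsPQ, joinCross, hQ,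
    mem_filter, mem_powersetCard, and_comm]
  refine and_congr_right fun ⟨he, hcard⟩ => ?_
  have hne : (e ∩ (T ∪ (P ∪ Q))).Nonempty := by
    rw [inter_eq_left.2 he]
    exact card_pos.1 (hcard ▸ three_pos)
  have heT := subset_right_iff_of_subset_union hT.symm (union_comm T _ ▸ he)
  have hePQ := subset_right_iff_of_subset_union hT he
  have heP := subset_right_iff_of_subset_union (disjoint_union_left.2 ⟨hTP, hPQ.symm⟩)
    (show e ⊆ T ∪ Q ∪ P by rwa [union_assoc, union_comm Q])
  have heQ := subset_right_iff_of_subset_union (disjoint_union_left.2 ⟨hTQ, hPQ⟩)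
    (show e ⊆ T ∪ P ∪ Q by rwa [union_assoc])
  simp only [inter_union_distrib_left, union_nonempty] at hne heT heP heQ ⊢
  rw [heT, hePQ, heP, heQ]
  clear he heT hePQ heP heQ
  tauto

theorem isJoinCross_completeOn_join_crossOn (m t : ℕ) :
    IsJoinCross m t ((completeOn 3 (range t)).join
      (crossOn 3 (Ico t (t + m / 2)) (Ico (t + m / 2) (m + t)))) := by
  have hPQ : Ico t (t + m / 2) ∪ Ico (t + m / 2) (m + t) = Ico t (m + t) :=
    Ico_union_Ico_eq_Ico (by omega) (by omega)
  have hT : Disjoint (range t) (Ico t (m + t)) := by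
    rw [range_eq_Ico]
    exact Ico_disjoint_Ico_consecutive 0 t (m + t)
  have hverts : range t ∪ Ico t (m + t) = range (m + t) := by
    rw [range_eq_Ico, range_eq_Ico, Ico_union_Ico_eq_Ico (Nat.zero_le t) (by omega)]
  have hV : ((completeOn 3 (range t)).join (crossOn 3 (Ico t (t + m / 2))
      (Ico (t + m / 2) (m + t)))).verts = range (m + t) := by
    rw [← hverts, ← hPQ]
    rfl
  rw [IsJoinCross, hV, card_range, edges_completeOn_join_crossOn (hPQ ▸ hT)
    (Ico_disjoint_Ico_consecutive _ _ _), hPQ, hverts]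
  refine ⟨rfl, range t, range_subset_range.2 (by omega), card_range t, Ico t (t + m / 2), ?_, ?_,
    rfl⟩
  · rw [← hverts, union_sdiff_left, sdiff_eq_self_of_disjoint hT.symm]
    exact Ico_subset_Ico_right (by omega)
  · rw [Nat.card_Ico, Nat.add_sub_cancel_left]

theorem IsJoinCross.not_hasMatching (h : IsJoinCross m t H) : ¬fano.HasMatching H (t + 1) := by
  obtain ⟨-, T, -, rfl, P, -, -, hH⟩ := h
  rw [hasMatching_fano_iff, hH]
  exact not_hasFanoMatching_joinCross

theorem IsJoinCross.card_edges (h : IsJoinCross m t H) :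
    #H.edges + m.choose 3 = (m + t).choose 3 + balancedCrossCard m := by
  obtain ⟨hcard, T, hT, hTt, P, hP, hhalf, hH⟩ := h
  have hm : #(H.verts \ T) = m := by
    rw [card_sdiff_of_subset hT, hcard, hTt, Nat.add_sub_cancel]
  have := card_joinCross hP (by rw [hhalf, hm])
  rwa [← hH, hm, hcard] at this

theorem isJoinCross_of_not_hasMatching (hm : 10 ^ 60 ≤ m) (hmt : 10 ^ 20 * t ≤ m)
    (hcard : #H.verts = m + t) (hno : ¬fano.HasMatching H (t + 1))
    (hedges : (m + t).choose 3 + balancedCrossCard m ≤ #H.edges + m.choose 3) :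
    IsJoinCross m t H :=
  ⟨hcard, exists_eq_joinCross hm hmt (edges_subset_powersetCard H) hcard
    (mt hasMatching_fano_iff.2 hno) hedges⟩

theorem exMatchN_fano_add_choose (hm : 10 ^ 60 ≤ m) (hmt : 10 ^ 20 * t ≤ m) :
    exMatchN 3 (m + t) t fano + m.choose 3 = (m + t).choose 3 + balancedCrossCard m := by
  have hJ := isJoinCross_completeOn_join_crossOn m t
  rw [← hJ.card_edges]
  congr 1
  refine IsGreatest.csSup_eq ⟨⟨_, hJ.1, hJ.not_hasMatching, rfl⟩, ?_⟩
  rintro _ ⟨H, hcard, hno, rfl⟩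
  by_contra! hlt
  have hH := (isJoinCross_of_not_hasMatching hm hmt hcard hno (by
    have := hJ.card_edges
    omega)).card_edges
  have := hJ.card_edges
  omega

theorem isExtremalMatchingFree_fano_iff (hm : 10 ^ 60 ≤ m) (hmt : 10 ^ 20 * t ≤ m) :
    IsExtremalMatchingFree 3 (m + t) t fano H ↔ IsJoinCross m t H := by
  have hex := exMatchN_fano_add_choose hm hmt
  refine ⟨fun ⟨hcard, hno, hedges⟩ =>
    isJoinCross_of_not_hasMatching hm hmt hcard hno (by omega), fun h => ?_⟩
  have := h.card_edges
  exact ⟨h.1, h.not_hasMatching, by omega⟩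

end ExtremalGraph

end

/-- the density Corrádi–Hajnal theorem for the Fano plane. -/
theorem statement_6 :
    ∃ N₀ : ℕ, ∃ c : ℝ, 0 < c ∧ ∀ n : ℕ, N₀ ≤ n → ∀ t : ℕ, (t : ℝ) ≤ c * n →
      ∀ H : HGraph 3, IsExtremalMatchingFree 3 n t fano H ↔
        H.Iso ((completeOn 3 (Finset.range t)).join
          (crossOn 3 (Finset.Ico t (t + (n - t) / 2)) (Finset.Ico (t + (n - t) / 2) n))) := by
  refine ⟨2 * 10 ^ 60, 1 / 10 ^ 21, by positivity, fun n hn t ht H => ?_⟩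
  have hnt : 10 ^ 21 * t ≤ n := by
    rw [div_mul_eq_mul_div, one_mul, le_div_iff₀' (by positivity)] at ht
    exact_mod_cast ht
  obtain ⟨m, rfl⟩ := Nat.exists_eq_add_of_le' (show t ≤ n by omega)
  rw [Nat.add_sub_cancel, isExtremalMatchingFree_fano_iff (by omega) (by omega)]
  have hB := isJoinCross_completeOn_join_crossOn m t
  exact ⟨fun h => h.iso hB, hB.of_iso⟩

end DensityCH
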